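/- arXiv:math/0108153 — 2 statements merged into one kernel-verified Lean document; each statement's English description precedes it below -/
import Mathlib

section
/- Let n ≥ 1, let D ⊆ ℝⁿ be an open, connected, simply connected set and set M := D × ℝ ⊆ ℝ^{n+1}. Let r ∈ ℕ ∪ {∞} with r ≥ 1 and let v = (v¹, …, v^{n+1}) : M → ℝ^{n+1} be a C^r map such that: (i) v^{n+1}(x) ≠ 0 for all x ∈ M; (ii) there is a constant C > 0 with |v^i(x)| ≤ C·|v^{n+1}(x)| for all x ∈ M and all i ∈ {1,…,n}; (iii) the one-form ω := Σ_{k=1}^{n+1} v^k dx_k is integrable, i.e. for all x ∈ M and all i, j, k ∈ {1,…,n+1}: v^i(x)·(∂_j v^k(x) − ∂_k v^j(x)) − v^j(x)·(∂_i v^k(x) − ∂_k v^i(x)) + v^k(x)·(∂_i v^j(x) − ∂_j v^i(x)) = 0. Then there exist a C^r function f : M → ℝ and a C^{r−1} function λ : M → ℝ (C^∞ if r = ∞) with λ(x) ≠ 0 for all x ∈ M such that ∂_k f(x) = λ(x)·v^k(x) for all x ∈ M and all k ∈ {1,…,n+1}, i.e. df = λ ω on M. -/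
/-!
Since `ω` does not vanish on the vertical vector `(0, 1)`, its kernels are the hyperplanes
`dt = a dp` of a slope field `a = -ω(·, 0) / ω(0, 1)`. The bound on `ω` makes `a` bounded, so the
graph equation of `a` along a segment of the base never escapes to infinity in the cylinder and
has a solution over the whole segment. Let `transport a z q` be the height it reaches over `q` when
started at `z = (p, t)`. By the Frobenius condition, moving the endpoints along the hyperplanes
solves the linearized equation, which gives the differential of the transport in closed form: it is
`a dq + c (dt - a dp)` with `c > 0`. In particular transport through an intermediate point of
a convex set does not depend on that point, so transport defines a covering space of the base whose
sections are the integral leaves, and simple connectedness extends every leaf to all of `D`.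
Label each leaf by its height over a base point: this label `f` is constant on leaves, so `df`
vanishes on `ker ω` and is a multiple of `ω`.
-/

open Set Filter Topology Metric
open scoped NNReal

universe u

section ParametricIntegral

theorem exists_eventually_forall_mem_and_norm_le {X Θ F : Type*} [TopologicalSpace X]
    [TopologicalSpace Θ] [SeminormedAddCommGroup F] {W : Set (X × Θ)} (hW : IsOpen W)
    {G : X × Θ → F} (hG : ContinuousOn G W) {S : Set X} (hS : IsCompact S) {θ₀ : Θ}
    (hSW : ∀ s ∈ S, (s, θ₀) ∈ W) :
    ∃ C : ℝ, ∀ᶠ θ in 𝓝 θ₀, ∀ s ∈ S, (s, θ) ∈ W ∧ ‖G (s, θ)‖ ≤ C := by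
  obtain ⟨C, hC⟩ :=
    hS.exists_bound_of_continuousOn (hG.comp (by fun_prop : Continuous (·, θ₀)).continuousOn hSW)
  refine ⟨C + 1, hS.eventually_forall_of_forall_eventually fun s hs => ?_⟩
  have hlt : ∀ᶠ z in 𝓝 (s, θ₀), ‖G z‖ < C + 1 :=
    (hG.continuousAt (hW.mem_nhds (hSW s hs))).norm.eventually_lt continuousAt_const
      ((hC s hs).trans_lt (lt_add_one C))
  filter_upwards [(continuous_swap.tendsto (θ₀, s)).eventually
    ((hW.eventually_mem (hSW s hs)).and hlt)] with z hz
  exact ⟨hz.1, hz.2.le⟩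

variable {a b : ℝ}

theorem continuousAt_intervalIntegral {Θ F : Type*} [TopologicalSpace Θ]
    [FirstCountableTopology Θ] [NormedAddCommGroup F] [NormedSpace ℝ F] {W : Set (ℝ × Θ)}
    (hW : IsOpen W) {G : ℝ × Θ → F} (hG : ContinuousOn G W) {θ₀ : Θ}
    (hθ₀ : ∀ s ∈ uIcc a b, (s, θ₀) ∈ W) : ContinuousAt (fun θ => ∫ s in a..b, G (s, θ)) θ₀ := by
  obtain ⟨C, hC⟩ := exists_eventually_forall_mem_and_norm_le hW hG isCompact_uIcc hθ₀
  refine intervalIntegral.continuousAt_of_dominated_interval (bound := fun _ => C) ?_ ?_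
    (by simp) ?_
  · filter_upwards [hC] with θ hθ
    have hslice : ContinuousOn (fun s => G (s, θ)) (uIcc a b) :=
      hG.comp (by fun_prop) fun s hs => (hθ s hs).1
    exact (hslice.mono uIoc_subset_uIcc).aestronglyMeasurable measurableSet_uIoc
  · filter_upwards [hC] with θ hθ
    exact .of_forall fun s hs => (hθ s (uIoc_subset_uIcc hs)).2
  · refine .of_forall fun s hs => ?_
    exact (hG.continuousAt (hW.mem_nhds (hθ₀ s (uIoc_subset_uIcc hs)))).comp
      (by fun_prop : ContinuousAt (fun θ => (s, θ)) θ₀)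

theorem hasFDerivAt_intervalIntegral {Θ F : Type*} [NormedAddCommGroup Θ] [NormedSpace ℝ Θ]
    [NormedAddCommGroup F] [NormedSpace ℝ F] {W : Set (ℝ × Θ)} (hW : IsOpen W) {G : ℝ × Θ → F}
    (hG : ContDiffOn ℝ 1 G W) {θ₀ : Θ} (hθ₀ : ∀ s ∈ uIcc a b, (s, θ₀) ∈ W) :
    HasFDerivAt (fun θ => ∫ s in a..b, G (s, θ))
      (∫ s in a..b, (fderiv ℝ G (s, θ₀)).comp (.inr ℝ ℝ Θ)) θ₀ := by
  have hG' : ContinuousOn (fun z => (fderiv ℝ G z).comp (.inr ℝ ℝ Θ)) W :=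
    (hG.continuousOn_fderiv_of_isOpen hW le_rfl).clm_comp continuousOn_const
  obtain ⟨C, hC⟩ := exists_eventually_forall_mem_and_norm_le hW hG' isCompact_uIcc hθ₀
  have hslice : ∀ θ, (∀ s ∈ uIcc a b, (s, θ) ∈ W) →
      ContinuousOn (fun s => G (s, θ)) (uIcc a b) :=
    fun θ hθ => hG.continuousOn.comp (by fun_prop) hθ
  have hslice' : ContinuousOn (fun s => (fderiv ℝ G (s, θ₀)).comp (.inr ℝ ℝ Θ)) (uIcc a b) :=
    hG'.comp (by fun_prop : Continuous fun s : ℝ => (s, θ₀)).continuousOn hθ₀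
  refine intervalIntegral.hasFDerivAt_integral_of_dominated_of_fderiv_le
    (F' := fun θ s => (fderiv ℝ G (s, θ)).comp (.inr ℝ ℝ Θ)) (bound := fun _ => C) hC
    ?_ (hslice θ₀ hθ₀).intervalIntegrable
    ((hslice'.mono uIoc_subset_uIcc).aestronglyMeasurable measurableSet_uIoc)
    (.of_forall fun s hs θ hθ => (hθ s (uIoc_subset_uIcc hs)).2) (by simp)
    (.of_forall fun s hs θ hθ => ?_)
  · filter_upwards [hC] with θ hθ
    exact ((hslice θ fun s hs => (hθ s hs).1).mono uIoc_subset_uIcc).aestronglyMeasurable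
      measurableSet_uIoc
  · have hdiff : DifferentiableAt ℝ G (s, θ) := (hG.differentiableOn one_ne_zero).differentiableAt
      (hW.mem_nhds (hθ s (uIoc_subset_uIcc hs)).1)
    exact hdiff.hasFDerivAt.comp θ (hasFDerivAt_prodMk_right s θ)

theorem contDiffOn_intervalIntegral {Θ F : Type u} [NormedAddCommGroup Θ] [NormedSpace ℝ Θ]
    [NormedAddCommGroup F] [NormedSpace ℝ F] {n : ℕ∞} {W : Set (ℝ × Θ)} (hW : IsOpen W)
    {G : ℝ × Θ → F} (hG : ContDiffOn ℝ n G W) {Ω : Set Θ} (hΩ : IsOpen Ω)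
    (hΩW : ∀ θ ∈ Ω, ∀ s ∈ uIcc a b, (s, θ) ∈ W) :
    ContDiffOn ℝ n (fun θ => ∫ s in a..b, G (s, θ)) Ω := by
  rw [contDiffOn_iff_forall_nat_le]
  intro k hk
  replace hG : ContDiffOn ℝ k G W := hG.of_le (mod_cast hk)
  clear hk
  induction k generalizing F with
  | zero =>
    simp only [CharP.cast_eq_zero, contDiffOn_zero] at hG ⊢
    exact fun θ hθ => (continuousAt_intervalIntegral hW hG (hΩW θ hθ)).continuousWithinAt
  | succ k ih =>
    push_cast at hG ⊢
    have hderiv : ∀ θ ∈ Ω, HasFDerivAt (fun θ => ∫ s in a..b, G (s, θ))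
        (∫ s in a..b, (fderiv ℝ G (s, θ)).comp (.inr ℝ ℝ Θ)) θ :=
      fun θ hθ => hasFDerivAt_intervalIntegral hW (hG.of_le (by simp)) (hΩW θ hθ)
    rw [contDiffOn_succ_iff_fderiv_of_isOpen hΩ]
    refine ⟨fun θ hθ => (hderiv θ hθ).differentiableAt.differentiableWithinAt, by simp, ?_⟩
    have hG' : ContDiffOn ℝ k (fun z => (fderiv ℝ G z).comp (.inr ℝ ℝ Θ)) W :=
      ((contDiffOn_succ_iff_fderiv_of_isOpen hW).1 hG).2.2.clm_comp contDiffOn_const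
    exact (ih hG').congr fun θ hθ => (hderiv θ hθ).fderiv

end ParametricIntegral

section DifferentiableDependence

theorem eventually_forall_norm_sub_sub_fderiv_le {E F : Type*} [NormedAddCommGroup E]
    [NormedSpace ℝ E] [NormedAddCommGroup F] [NormedSpace ℝ F] {Ω : Set E} (hΩ : IsOpen Ω)
    {f : E → F} (hf : ContDiffOn ℝ 1 f Ω) {S : Set E} (hS : IsCompact S) (hSΩ : S ⊆ Ω)
    {ε : ℝ} (hε : 0 < ε) :
    ∀ᶠ h in 𝓝 (0 : E), ∀ z ∈ S, ‖f (z + h) - f z - fderiv ℝ f z h‖ ≤ ε * ‖h‖ := by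
  refine hS.eventually_forall_of_forall_eventually fun z hz => ?_
  have hzΩ := hΩ.mem_nhds (hSΩ hz)
  have hstrict := ((hf.contDiffAt hzΩ).hasStrictFDerivAt one_ne_zero).isLittleO.def (half_pos hε)
  have hfderiv : ∀ᶠ y in 𝓝 z, ‖fderiv ℝ f y - fderiv ℝ f z‖ < ε / 2 := by
    have hcont := (hf.continuousOn_fderiv_of_isOpen hΩ le_rfl).continuousAt hzΩ
    simpa only [dist_eq_norm] using Metric.tendsto_nhds.1 hcont (ε / 2) (half_pos hε)
  have hadd : Tendsto (fun w : E × E => (w.2 + w.1, w.2)) (𝓝 (0, z)) (𝓝 (z, z)) := by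
    simpa using (by fun_prop : Continuous fun w : E × E => (w.2 + w.1, w.2)).tendsto (0, z)
  filter_upwards [hadd.eventually hstrict, (continuous_snd.tendsto (0, z)).eventually hfderiv]
    with ⟨h, y⟩ hy_strict hy_fderiv
  simp only [add_sub_cancel_left] at hy_strict hy_fderiv ⊢
  calc ‖f (y + h) - f y - fderiv ℝ f y h‖
      = ‖(f (y + h) - f y - fderiv ℝ f z h) - (fderiv ℝ f y - fderiv ℝ f z) h‖ := by simp
    _ ≤ ε / 2 * ‖h‖ + ε / 2 * ‖h‖ :=
        (norm_sub_le _ _).trans (add_le_add hy_strict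
          (((fderiv ℝ f y - fderiv ℝ f z).le_opNorm h).trans (by gcongr)))
    _ = ε * ‖h‖ := by ring

theorem gronwallBound_le_mul_exp (δ : ℝ) {K ε x : ℝ} (hK : 0 ≤ K) (hε : 0 ≤ ε) :
    gronwallBound δ K ε x ≤ (δ + ε * x) * Real.exp (K * x) := by
  rcases hK.eq_or_lt with rfl | hK
  · simp [gronwallBound_K0]
  · rw [gronwallBound_of_K_ne_0 hK.ne']
    have hexp : Real.exp (K * x) - 1 ≤ K * x * Real.exp (K * x) := by
      have h := mul_le_mul_of_nonneg_right (Real.one_sub_le_exp_neg (K * x))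
        (Real.exp_pos (K * x)).le
      rw [← Real.exp_add, neg_add_cancel, Real.exp_zero] at h
      linarith
    calc δ * Real.exp (K * x) + ε / K * (Real.exp (K * x) - 1)
        ≤ δ * Real.exp (K * x) + ε / K * (K * x * Real.exp (K * x)) := by gcongr
      _ = (δ + ε * x) * Real.exp (K * x) := by field_simp

variable {Θ F : Type*} [NormedAddCommGroup Θ] [NormedSpace ℝ Θ] [NormedAddCommGroup F]
  [NormedSpace ℝ F] {g : (ℝ × F) × Θ → F} {W : Set ((ℝ × F) × Θ)} {t₀ t₁ : ℝ} {θ₀ : Θ}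

theorem exists_eventually_forall_lipschitzOnWith (hW : IsOpen W) (hg : ContDiffOn ℝ 1 g W)
    {S : Set ℝ} (hS : IsCompact S) {B : Set F} (hB : IsCompact B) (hBconv : Convex ℝ B)
    (hBW : ∀ s ∈ S, ∀ ξ ∈ B, ((s, ξ), θ₀) ∈ W) :
    ∃ C : ℝ≥0, ∀ᶠ θ in 𝓝 θ₀, ∀ s ∈ S, LipschitzOnWith C (fun ξ => g ((s, ξ), θ)) B := by
  obtain ⟨C, hC⟩ := exists_eventually_forall_mem_and_norm_le hW
    ((hg.continuousOn_fderiv_of_isOpen hW le_rfl).clm_comp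
      (continuousOn_const (c := (ContinuousLinearMap.inl ℝ (ℝ × F) Θ).comp (.inr ℝ ℝ F))))
    (hS.prod hB) (fun z hz => hBW z.1 hz.1 z.2 hz.2)
  refine ⟨C.toNNReal, hC.mono fun θ hθ s hs => ?_⟩
  refine hBconv.lipschitzOnWith_of_nnnorm_hasFDerivWithin_le
    (f' := fun ξ => (fderiv ℝ g ((s, ξ), θ)).comp
      ((ContinuousLinearMap.inl ℝ (ℝ × F) Θ).comp (.inr ℝ ℝ F))) (fun ξ hξ => ?_) (fun ξ hξ => ?_)
  · have hdiff : DifferentiableAt ℝ g ((s, ξ), θ) :=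
      (hg.differentiableOn one_ne_zero).differentiableAt (hW.mem_nhds (hθ (s, ξ) ⟨hs, hξ⟩).1)
    have hslice : HasFDerivAt (fun ξ : F => ((s, ξ), θ))
        ((ContinuousLinearMap.inl ℝ (ℝ × F) Θ).comp (.inr ℝ ℝ F)) ξ :=
      HasFDerivAt.comp (g := fun w => (w, θ)) ξ (hasFDerivAt_prodMk_left (s, ξ) θ)
        (hasFDerivAt_prodMk_right s ξ)
    exact (hdiff.hasFDerivAt.comp ξ hslice).hasFDerivWithinAt
  · rw [← NNReal.coe_le_coe, coe_nnnorm]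
    exact (hθ (s, ξ) ⟨hs, hξ⟩).2.trans (Real.le_coe_toNNReal C)

theorem eventually_forall_norm_linearization_le (hW : IsOpen W) (hg : ContDiffOn ℝ 1 g W)
    {x : ℝ → F} (hx : ContinuousOn x (Icc t₀ t₁)) (hxW : ∀ s ∈ Icc t₀ t₁, ((s, x s), θ₀) ∈ W)
    {Y : ℝ → Θ →L[ℝ] F} (hY : ContinuousOn Y (Icc t₀ t₁)) {η : ℝ} (hη : 0 < η) :
    ∀ᶠ d in 𝓝 (0 : Θ), ∀ s ∈ Icc t₀ t₁,
      ‖g ((s, x s + Y s d), θ₀ + d) - g ((s, x s), θ₀)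
        - fderiv ℝ g ((s, x s), θ₀) ((0, Y s d), d)‖ ≤ η * ‖d‖ := by
  obtain ⟨C, hC⟩ := isCompact_Icc.exists_bound_of_continuousOn hY
  have hshift : ∀ d, ∀ s ∈ Icc t₀ t₁, ‖(((0 : ℝ), Y s d), d)‖ ≤ max C 1 * ‖d‖ := fun d s hs => by
    refine (max_le (max_le ?_ ?_) ?_ : ‖(((0 : ℝ), Y s d), d)‖ ≤ _)
    · simp
    · exact ((Y s).le_opNorm d).trans (by gcongr; exact (hC s hs).trans (le_max_left _ _))
    · exact le_mul_of_one_le_left (norm_nonneg d) (le_max_right _ _)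
  have hm : 0 < max C 1 := lt_max_of_lt_right one_pos
  have hcompact : IsCompact ((fun s => ((s, x s), θ₀)) '' Icc t₀ t₁) :=
    isCompact_Icc.image_of_continuousOn (by fun_prop)
  have htaylor := eventually_forall_norm_sub_sub_fderiv_le hW hg hcompact
    (image_subset_iff.2 hxW) (div_pos hη hm)
  obtain ⟨δ, hδ, hball⟩ := Metric.eventually_nhds_iff_ball.1 htaylor
  filter_upwards [ball_mem_nhds 0 (div_pos hδ hm)] with d hd s hs
  rw [mem_ball_zero_iff, lt_div_iff₀ hm, mul_comm] at hd
  have hlin := hball ((0, Y s d), d) (mem_ball_zero_iff.2 ((hshift d s hs).trans_lt hd)) _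
    (mem_image_of_mem _ hs)
  simp only [Prod.mk_add_mk, add_zero] at hlin
  calc _ ≤ η / max C 1 * ‖(((0 : ℝ), Y s d), d)‖ := hlin
    _ ≤ η / max C 1 * (max C 1 * ‖d‖) := by gcongr; exact hshift d s hs
    _ = η * ‖d‖ := by field_simp

theorem dist_le_of_isIntegralCurveOn_of_approx (ht : t₀ ≤ t₁) {v : ℝ → F → F}
    {x y y' : ℝ → F} {B : Set F} {K : ℝ≥0} {δ ε : ℝ}
    (hv : ∀ s ∈ Icc t₀ t₁, LipschitzOnWith K (v s) B)
    (hx : IsIntegralCurveOn x v (Icc t₀ t₁)) (hxB : ∀ s ∈ Icc t₀ t₁, x s ∈ B)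
    (hy : ∀ s ∈ Icc t₀ t₁, HasDerivWithinAt y (y' s) (Icc t₀ t₁) s)
    (hy' : ∀ s ∈ Icc t₀ t₁, dist (y' s) (v s (y s)) ≤ ε) (hyB : ∀ s ∈ Icc t₀ t₁, y s ∈ B)
    (h₀ : dist (x t₀) (y t₀) ≤ δ) :
    dist (x t₁) (y t₁) ≤ (δ + ε * (t₁ - t₀)) * Real.exp (K * (t₁ - t₀)) := by
  have hright : ∀ {z : ℝ → F} {z' : F} {s : ℝ}, s ∈ Ico t₀ t₁ →
      HasDerivWithinAt z z' (Icc t₀ t₁) s → HasDerivWithinAt z z' (Ici s) s :=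
    fun hs h => h.mono_of_mem_nhdsWithin (Icc_mem_nhdsGE_of_mem hs)
  have hε : 0 ≤ ε := dist_nonneg.trans (hy' t₀ (left_mem_Icc.2 ht))
  refine (dist_le_of_approx_trajectories_ODE_of_mem (v := v) (s := fun _ => B) (εf := 0)
    (fun s hs => hv s (Ico_subset_Icc_self hs)) hx.continuousOn
    (fun s hs => hright hs (hx s (Ico_subset_Icc_self hs))) (fun s _ => (dist_self _).le)
    (fun s hs => hxB s (Ico_subset_Icc_self hs)) (fun s hs => (hy s hs).continuousWithinAt)
    (fun s hs => hright hs (hy s (Ico_subset_Icc_self hs)))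
    (fun s hs => hy' s (Ico_subset_Icc_self hs)) (fun s hs => hyB s (Ico_subset_Icc_self hs)) h₀
    t₁ (right_mem_Icc.2 ht)).trans ?_
  rw [zero_add]
  exact gronwallBound_le_mul_exp δ K.2 hε

theorem eventually_forall_add_clm_apply_mem {X : Type*} [TopologicalSpace X] {S : Set X}
    (hS : IsCompact S) {x : X → F} (hx : ContinuousOn x S) {Y : X → Θ →L[ℝ] F}
    (hY : ContinuousOn Y S) {B : Set F} (hB : B ∈ 𝓝ˢ (x '' S)) :
    ∀ᶠ d in 𝓝 (0 : Θ), ∀ s ∈ S, x s + Y s d ∈ B := by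
  obtain ⟨C, hC⟩ := hS.exists_bound_of_continuousOn hY
  obtain ⟨U, hU, hxU, hUB⟩ := mem_nhdsSet_iff_exists.1 hB
  obtain ⟨ρ, hρ, hthick⟩ := (hS.image_of_continuousOn hx).exists_thickening_subset_open hU hxU
  have hC1 : 0 < max C 1 := lt_max_of_lt_right one_pos
  filter_upwards [ball_mem_nhds 0 (div_pos hρ hC1)] with d hd s hs
  rw [mem_ball_zero_iff, lt_div_iff₀' hC1] at hd
  refine hUB (hthick (mem_thickening_iff.2 ⟨x s, mem_image_of_mem x hs, ?_⟩))
  rw [dist_self_add_left]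
  exact (((Y s).le_of_opNorm_le (hC s hs) d).trans (by gcongr; exact le_max_left C 1)).trans_lt hd

theorem hasFDerivAt_of_eventually_isIntegralCurveOn (ht : t₀ ≤ t₁) (hW : IsOpen W)
    (hg : ContDiffOn ℝ 1 g W) {x : Θ → ℝ → F}
    (hx : ∀ᶠ θ in 𝓝 θ₀, IsIntegralCurveOn (x θ) (fun s ξ => g ((s, ξ), θ)) (Icc t₀ t₁))
    (hxW : ∀ s ∈ Icc t₀ t₁, ((s, x θ₀ s), θ₀) ∈ W) {B : Set F} {K : ℝ≥0}
    (hlip : ∀ᶠ θ in 𝓝 θ₀, ∀ s ∈ Icc t₀ t₁, LipschitzOnWith K (fun ξ => g ((s, ξ), θ)) B)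
    (hxB : ∀ᶠ θ in 𝓝 θ₀, ∀ s ∈ Icc t₀ t₁, x θ s ∈ B) (hB : B ∈ 𝓝ˢ (x θ₀ '' Icc t₀ t₁))
    {Y : ℝ → Θ →L[ℝ] F}
    (hY : ∀ s ∈ Icc t₀ t₁, HasDerivWithinAt Y ((fderiv ℝ g ((s, x θ₀ s), θ₀)).comp
      (((0 : Θ →L[ℝ] ℝ).prod (Y s)).prod (.id ℝ Θ))) (Icc t₀ t₁) s)
    (hY₀ : HasFDerivAt (fun θ => x θ t₀) (Y t₀) θ₀) :
    HasFDerivAt (fun θ => x θ t₁) (Y t₁) θ₀ := by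
  have hYcont : ContinuousOn Y (Icc t₀ t₁) := fun s hs => (hY s hs).continuousWithinAt
  have hxcont : ContinuousOn (x θ₀) (Icc t₀ t₁) := hx.self_of_nhds.continuousOn
  have hsub : Tendsto (fun θ => θ - θ₀) (𝓝 θ₀) (𝓝 0) := tendsto_sub_nhds_zero_iff.2 tendsto_id
  set M := (1 + (t₁ - t₀)) * Real.exp (K * (t₁ - t₀)) with hM
  have hMpos : 0 < M := mul_pos (by linarith) (Real.exp_pos _)
  refine .of_isLittleO (Asymptotics.isLittleO_iff.2 fun c hc => ?_)
  have hη : 0 < c / M := div_pos hc hMpos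
  filter_upwards [hx, hlip, hxB, hY₀.isLittleO.def hη,
    hsub.eventually (eventually_forall_add_clm_apply_mem isCompact_Icc hxcont hYcont hB),
    hsub.eventually (eventually_forall_norm_linearization_le hW hg hxcont hxW hYcont hη)]
    with θ hxθ hlipθ hxBθ hinit hmem hlin
  have hderiv : ∀ s ∈ Icc t₀ t₁, HasDerivWithinAt (fun s => x θ₀ s + Y s (θ - θ₀))
      (g ((s, x θ₀ s), θ₀) + fderiv ℝ g ((s, x θ₀ s), θ₀) ((0, Y s (θ - θ₀)), θ - θ₀))
      (Icc t₀ t₁) s := fun s hs => (hx.self_of_nhds s hs).add <|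
    ((hY s hs).clm_apply (hasDerivWithinAt_const s _ (θ - θ₀))).congr_deriv (by simp)
  have hdist := dist_le_of_isIntegralCurveOn_of_approx ht hlipθ hxθ hxBθ hderiv
    (ε := c / M * ‖θ - θ₀‖) (fun s hs => ?_) hmem (δ := c / M * ‖θ - θ₀‖)
    (by rwa [dist_eq_norm, ← sub_sub])
  · calc ‖x θ t₁ - x θ₀ t₁ - Y t₁ (θ - θ₀)‖
        = dist (x θ t₁) (x θ₀ t₁ + Y t₁ (θ - θ₀)) := by rw [dist_eq_norm, sub_sub]
      _ ≤ _ := hdist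
      _ = c / M * ‖θ - θ₀‖ * M := by rw [hM]; ring
      _ = c * ‖θ - θ₀‖ := by field_simp
  · rw [dist_comm, dist_eq_norm, ← sub_sub]
    simpa only [add_sub_cancel] using hlin s hs

end DifferentiableDependence

section Monodromy

/-- A flat parallel transport between nearby fibres of `X × F`: `transport x τ y` moves the
element `τ` of the fibre over `x` to the fibre over `y`, and is meaningful when `x` and `y` lie in
a common `baseSet i`. -/
structure LocalTransport (X F : Type*) [TopologicalSpace X] where
  baseSet : X → Set X
  isOpen_baseSet : ∀ i, IsOpen (baseSet i)
  mem_baseSet : ∀ i, i ∈ baseSet i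
  isPreconnected_baseSet : ∀ i, IsPreconnected (baseSet i)
  transport : X → F → X → F
  transport_self : ∀ x τ, transport x τ x = τ
  transport_transport : ∀ i, ∀ x ∈ baseSet i, ∀ y ∈ baseSet i, ∀ z ∈ baseSet i, ∀ τ,
    transport y (transport x τ y) z = transport x τ z

namespace LocalTransport

variable {X F : Type*} [TopologicalSpace X]

/-- The functions `X → F` preserved by the transport: the flat sections of the associated
bundle. -/
def IsHorizontal (L : LocalTransport X F) (g : X → F) : Prop :=
  ∀ i, ∀ x ∈ L.baseSet i, ∀ y ∈ L.baseSet i, L.transport x (g x) y = g y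

/-- The bundle with discrete fibre whose coordinates over `L.baseSet i` are obtained by
transporting to the fibre over `i`. -/
def bundleCore [TopologicalSpace F] [DiscreteTopology F] (L : LocalTransport X F) :
    FiberBundleCore X X F where
  baseSet := L.baseSet
  isOpen_baseSet := L.isOpen_baseSet
  indexAt := id
  mem_baseSet_at := L.mem_baseSet
  coordChange i j x τ := L.transport x (L.transport i τ x) j
  coordChange_self i x hx τ := by
    rw [L.transport_transport i i (L.mem_baseSet i) x hx i (L.mem_baseSet i), L.transport_self]
  continuousOn_coordChange i j := by
    refine continuousOn_prod_of_discrete_right.2 fun τ x ⟨hx, _⟩ => ?_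
    have hlocal : ∀ᶠ y in 𝓝 x, y ∈ L.baseSet i ∩ L.baseSet j :=
      ((L.isOpen_baseSet i).inter (L.isOpen_baseSet j)).mem_nhds hx
    refine ContinuousAt.continuousWithinAt (continuousAt_const.congr
      (f := fun _ => L.transport x (L.transport i τ x) j) (hlocal.mono fun y hy => ?_))
    dsimp only
    rw [← L.transport_transport i i (L.mem_baseSet i) x hx.1 y hy.1,
      L.transport_transport j x hx.2 y hy.2 j (L.mem_baseSet j)]
  coordChange_comp i j k x hx τ := by
    rw [L.transport_transport j x hx.1.2 j (L.mem_baseSet j) x hx.1.2, L.transport_self]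

theorem continuous_section_iff [TopologicalSpace F] [DiscreteTopology F] (L : LocalTransport X F)
    {g : X → F} :
    Continuous (fun x => (⟨x, g x⟩ : L.bundleCore.TotalSpace)) ↔ L.IsHorizontal g := by
  have hcoord : ∀ i x, (L.bundleCore.localTriv i ⟨x, g x⟩).2 = L.transport x (g x) i :=
    fun i x => congrArg (L.transport x · i) (L.transport_self x (g x))
  constructor
  · intro hg i x hx y hy
    have hcont : ContinuousOn (fun x => (L.bundleCore.localTriv i ⟨x, g x⟩).2) (L.baseSet i) :=
      continuous_snd.comp_continuousOn ((L.bundleCore.localTriv i).continuousOn.comp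
        hg.continuousOn fun z hz => (L.bundleCore.mem_localTriv_source i _).2 hz)
    have hconst := (L.isPreconnected_baseSet i).constant hcont hx hy
    rw [hcoord, hcoord] at hconst
    rw [← L.transport_transport i x hx i (L.mem_baseSet i) y hy, hconst,
      L.transport_transport i y hy i (L.mem_baseSet i) y hy, L.transport_self]
  · refine fun hg => continuous_iff_continuousAt.2 fun x => ?_
    refine (FiberBundle.continuousAt_totalSpace F _).2 ⟨continuousAt_id, ?_⟩
    refine continuousAt_const.congr (f := fun _ => g x) ?_
    filter_upwards [(L.isOpen_baseSet x).mem_nhds (L.mem_baseSet x)] with y hy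
    exact ((hcoord x y).trans (hg x y hy x (L.mem_baseSet x))).symm

theorem existsUnique_isHorizontal [SimplyConnectedSpace X] [LocallyPathConnectedSpace X]
    (L : LocalTransport X F) (x : X) (τ : F) : ∃! g : X → F, L.IsHorizontal g ∧ g x = τ := by
  let _ : TopologicalSpace F := ⊥
  have : DiscreteTopology F := ⟨rfl⟩
  have hcov : IsCoveringMap (Bundle.TotalSpace.proj : L.bundleCore.TotalSpace → X) :=
    FiberBundle.isCoveringMap (F := F) (E := L.bundleCore.Fiber)
  obtain ⟨S, ⟨hSx, hS⟩, hunique⟩ := hcov.existsUnique_continuousMap_lifts (ContinuousMap.id X) x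
    (⟨x, τ⟩ : L.bundleCore.TotalSpace) rfl
  have hsection : ⇑S = fun y => (⟨y, (S y).2⟩ : L.bundleCore.TotalSpace) :=
    funext fun y => Bundle.TotalSpace.ext (congrFun hS y) HEq.rfl
  refine ⟨fun y => (S y).2, ⟨L.continuous_section_iff.1 (hsection ▸ S.continuous), ?_⟩, ?_⟩
  · exact congrArg (fun e : L.bundleCore.TotalSpace => (e.2 : F)) hSx
  · rintro g ⟨hg, rfl⟩
    rw [← hunique ⟨_, L.continuous_section_iff.2 hg⟩ ⟨rfl, rfl⟩]
    rfl

theorem exists_invariant [SimplyConnectedSpace X] [LocallyPathConnectedSpace X]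
    (L : LocalTransport X F) (p₀ : X) :
    ∃ f : X → F → F, (∀ τ, f p₀ τ = τ) ∧
      ∀ i, ∀ x ∈ L.baseSet i, ∀ y ∈ L.baseSet i, ∀ τ, f y (L.transport x τ y) = f x τ := by
  choose g hg hgu using L.existsUnique_isHorizontal
  refine ⟨fun x τ => g x τ p₀, fun τ => (hg p₀ τ).2, fun i x hx y hy τ => congrFun ?_ p₀⟩
  refine (hgu y _ _ ⟨(hg x τ).1, ?_⟩).symm
  simpa [(hg x τ).2] using ((hg x τ).1 i x hx y hy).symm

end LocalTransport

end Monodromy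

namespace EulerMultiplier

section SlopeField

variable {E : Type u} [NormedAddCommGroup E] [NormedSpace ℝ E]

/-- A slope field over a convex open set `U`: a `C¹` family `a (p, t)` of candidate differentials
at `p` for a function whose graph passes through `(p, t)`. The bound `K` makes the graph equation
solvable along every segment in `U`. -/
structure IsBoundedSlopeOn (a : E × ℝ → E →L[ℝ] ℝ) (U : Set E) (K : ℝ≥0) : Prop where
  isOpen : IsOpen U
  convex : Convex ℝ U
  contDiffOn : ContDiffOn ℝ 1 a (U ×ˢ univ)
  norm_le : ∀ z ∈ U ×ˢ (univ : Set ℝ), ‖a z‖ ≤ K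

/-- The Frobenius condition for the hyperplane field `dt = a dp`: the derivative of `a` along
lifts of base vectors is symmetric. -/
def IsFlatSlopeOn (a : E × ℝ → E →L[ℝ] ℝ) (U : Set E) : Prop :=
  ∀ z ∈ U ×ˢ (univ : Set ℝ), ∀ u w, fderiv ℝ a z (u, a z u) w = fderiv ℝ a z (w, a z w) u

/-- The one-form `dt - a dp`, whose kernels are the hyperplanes defined by the slope field `a`. -/
def contactForm (a : E × ℝ → E →L[ℝ] ℝ) (z : E × ℝ) : E × ℝ →L[ℝ] ℝ :=
  .snd ℝ E ℝ - (a z).comp (.fst ℝ E ℝ)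

/-- The right-hand side of the graph equation of `a` along the segment from `p` to `q`, evaluated
at time `s` and height `ξ`; its argument is `((s, ξ), (p, t), q)`, the initial height `t` being
carried along as a parameter. -/
def segmentField (a : E × ℝ → E →L[ℝ] ℝ) (w : (ℝ × ℝ) × (E × ℝ) × E) : ℝ :=
  a (w.2.1.1 + w.1.1 • (w.2.2 - w.2.1.1), w.1.2) (w.2.2 - w.2.1.1)

/-- `x` is the height of an integral curve of `a` starting at `z` and lying over the segment from
`z.1` to `q`. -/
def IsSegmentLift (a : E × ℝ → E →L[ℝ] ℝ) (z : E × ℝ) (q : E) (x : ℝ → ℝ) : Prop :=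
  x 0 = z.2 ∧ IsIntegralCurveOn x (fun s ξ => segmentField a ((s, ξ), z, q)) (Icc 0 1)

/-- The height over `q` reached from `z` by following the slope field along the segment from `z.1`
to `q`. It is arbitrary if there is no such lift. -/
noncomputable def transport (a : E × ℝ → E →L[ℝ] ℝ) (z : E × ℝ) (q : E) : ℝ :=
  Classical.epsilon fun τ => ∃ x, IsSegmentLift a z q x ∧ x 1 = τ

/-- The point at time `s` of the lift from `z` of the segment from `z.1` to `q`. -/
noncomputable def segmentPoint (a : E × ℝ → E →L[ℝ] ℝ) (z : E × ℝ) (q : E) (s : ℝ) : E × ℝ :=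
  (z.1 + s • (q - z.1), transport a z (z.1 + s • (q - z.1)))

/-- The derivative of the height at time `s` of the lift from `z` towards `q` with respect to the
initial height, as the solution of the linearized graph equation. -/
noncomputable def holonomyFactor (a : E × ℝ → E →L[ℝ] ℝ) (z : E × ℝ) (q : E) (s : ℝ) : ℝ :=
  Real.exp ((∫ σ in (0 : ℝ)..s, fderiv ℝ a (segmentPoint a z q σ) (0, 1)) (q - z.1))

/-- The derivative of the height at time `s` of the lift from `z` towards `q` with respect to
`(z, q)`, for a flat slope field. -/
noncomputable def transportVariation (a : E × ℝ → E →L[ℝ] ℝ) (z : E × ℝ) (q : E) (s : ℝ) :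
    (E × ℝ) × E →L[ℝ] ℝ :=
  (a (segmentPoint a z q s)).comp
      ((ContinuousLinearMap.fst ℝ E ℝ).comp (.fst ℝ (E × ℝ) E)
        + s • (.snd ℝ (E × ℝ) E - (ContinuousLinearMap.fst ℝ E ℝ).comp (.fst ℝ (E × ℝ) E)))
    + holonomyFactor a z q s • (contactForm a z).comp (.fst ℝ (E × ℝ) E)

variable {a : E × ℝ → E →L[ℝ] ℝ} {U : Set E} {K : ℝ≥0} {z : E × ℝ} {q : E} {x : ℝ → ℝ}

theorem isOpen_setOf_segment_mem (hU : IsOpen U) :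
    IsOpen {w : (ℝ × ℝ) × (E × ℝ) × E | w.2.1.1 + w.1.1 • (w.2.2 - w.2.1.1) ∈ U} :=
  hU.preimage (by fun_prop)

theorem contDiffOn_segmentField {n : WithTop ℕ∞} (ha : ContDiffOn ℝ n a (U ×ˢ univ)) :
    ContDiffOn ℝ n (segmentField a) {w | w.2.1.1 + w.1.1 • (w.2.2 - w.2.1.1) ∈ U} :=
  have hpoint : ContDiff ℝ n fun w : (ℝ × ℝ) × (E × ℝ) × E =>
      (w.2.1.1 + w.1.1 • (w.2.2 - w.2.1.1), w.1.2) := by fun_prop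
  (ha.comp hpoint.contDiffOn fun _ hw => ⟨hw, mem_univ _⟩).clm_apply (by fun_prop)

theorem IsSegmentLift.comp_mul (hx : IsSegmentLift a z q x) {s : ℝ} (hs : s ∈ Icc (0 : ℝ) 1) :
    IsSegmentLift a z (z.1 + s • (q - z.1)) (fun σ => x (σ * s)) := by
  refine ⟨by simpa using hx.1, fun σ hσ => ?_⟩
  have hmaps : MapsTo (· * s) (Icc (0 : ℝ) 1) (Icc 0 1) := fun σ hσ =>
    ⟨mul_nonneg hσ.1 hs.1, mul_le_one₀ hσ.2 hs.1 hs.2⟩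
  refine ((hx.2 (σ * s) (hmaps hσ)).scomp σ (hasDerivAt_mul_const s).hasDerivWithinAt
    hmaps).congr_deriv ?_
  simp [segmentField, smul_smul]

namespace IsBoundedSlopeOn

theorem isOpen_prod (ha : IsBoundedSlopeOn a U K) : IsOpen (U ×ˢ (univ : Set ℝ)) :=
  ha.isOpen.prod isOpen_univ

theorem norm_segmentField_le (ha : IsBoundedSlopeOn a U K) (hz : z.1 ∈ U) (hq : q ∈ U) {s : ℝ}
    (hs : s ∈ Icc (0 : ℝ) 1) (ξ : ℝ) : ‖segmentField a ((s, ξ), z, q)‖ ≤ K * ‖q - z.1‖ :=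
  (a _).le_of_opNorm_le (ha.norm_le (z.1 + s • (q - z.1), ξ)
    ⟨ha.convex.add_smul_sub_mem hz hq hs, mem_univ _⟩) _

theorem abs_segmentLift_le (ha : IsBoundedSlopeOn a U K) (hz : z.1 ∈ U) (hq : q ∈ U)
    (hx : IsSegmentLift a z q x) {s : ℝ} (hs : s ∈ Icc (0 : ℝ) 1) :
    |x s| ≤ |z.2| + K * ‖q - z.1‖ := by
  have hvar := (convex_Icc (0 : ℝ) 1).norm_image_sub_le_of_norm_hasDerivWithin_le hx.2
    (fun σ hσ => ha.norm_segmentField_le hz hq hσ (x σ)) (left_mem_Icc.2 zero_le_one) hs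
  rw [hx.1, sub_zero, Real.norm_eq_abs, Real.norm_eq_abs, abs_of_nonneg hs.1] at hvar
  calc |x s| ≤ |z.2| + |x s - z.2| := by linarith [abs_sub_abs_le_abs_sub (x s) z.2]
    _ ≤ |z.2| + K * ‖q - z.1‖ := by
      gcongr
      exact hvar.trans (mul_le_of_le_one_right (by positivity) hs.2)

theorem exists_eventually_lipschitzOnWith (ha : IsBoundedSlopeOn a U K) (hz : z.1 ∈ U)
    (hq : q ∈ U) (R : ℝ) :
    ∃ C : ℝ≥0, ∀ᶠ θ in 𝓝 (z, q), ∀ s ∈ Icc (0 : ℝ) 1,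
      LipschitzOnWith C (fun ξ => segmentField a ((s, ξ), θ)) (closedBall 0 R) := by
  have hmem : ∀ s ∈ Icc (0 : ℝ) 1, ∀ ξ ∈ closedBall (0 : ℝ) R, ((s, ξ), (z, q)) ∈
      {w : (ℝ × ℝ) × (E × ℝ) × E | w.2.1.1 + w.1.1 • (w.2.2 - w.2.1.1) ∈ U} :=
    fun s hs _ _ => ha.convex.add_smul_sub_mem hz hq hs
  exact exists_eventually_forall_lipschitzOnWith (g := segmentField a) (θ₀ := (z, q))
    (isOpen_setOf_segment_mem ha.isOpen) (contDiffOn_segmentField ha.contDiffOn) isCompact_Icc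
    (isCompact_closedBall 0 R) (convex_closedBall 0 R) hmem

theorem exists_isSegmentLift (ha : IsBoundedSlopeOn a U K) (hz : z.1 ∈ U) (hq : q ∈ U) :
    ∃ x, IsSegmentLift a z q x := by
  set A : ℝ≥0 := K * ‖q - z.1‖₊ with hA
  obtain ⟨C, hC⟩ := ha.exists_eventually_lipschitzOnWith hz hq (|z.2| + A)
  have hPL : IsPicardLindelof (fun s ξ => segmentField a ((s, ξ), z, q))
      (⟨0, left_mem_Icc.2 zero_le_one⟩ : Icc (0 : ℝ) 1) z.2 A 0 A C :=
    { lipschitzOnWith := fun s hs => (hC.self_of_nhds s hs).mono <|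
        closedBall_subset_closedBall' (by simp [add_comm])
      continuousOn := fun ξ _ => (contDiffOn_segmentField ha.contDiffOn).continuousOn.comp
        (by fun_prop) fun s hs => ha.convex.add_smul_sub_mem hz hq hs
      norm_le := fun s hs ξ _ => by simpa [hA] using ha.norm_segmentField_le hz hq hs ξ
      mul_max_le := by simp }
  exact hPL.exists_eq_forall_mem_Icc_hasDerivWithinAt₀

theorem segmentLift_one_eq (ha : IsBoundedSlopeOn a U K) (hz : z.1 ∈ U) (hq : q ∈ U) {y : ℝ → ℝ}
    (hx : IsSegmentLift a z q x) (hy : IsSegmentLift a z q y) : x 1 = y 1 := by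
  obtain ⟨C, hC⟩ := ha.exists_eventually_lipschitzOnWith hz hq (|z.2| + K * ‖q - z.1‖)
  have hball : ∀ {x}, IsSegmentLift a z q x →
      ∀ s ∈ Icc (0 : ℝ) 1, x s ∈ closedBall (0 : ℝ) (|z.2| + K * ‖q - z.1‖) := fun hx s hs => by
    simpa using ha.abs_segmentLift_le hz hq hx hs
  have hdist := dist_le_of_isIntegralCurveOn_of_approx zero_le_one hC.self_of_nhds hx.2 (hball hx)
    hy.2 (fun _ _ => (dist_self _).le) (hball hy) (by rw [hx.1, hy.1, dist_self])
  exact dist_le_zero.1 (hdist.trans_eq (by simp))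

theorem transport_eq (ha : IsBoundedSlopeOn a U K) (hz : z.1 ∈ U) (hq : q ∈ U)
    (hx : IsSegmentLift a z q x) : transport a z q = x 1 := by
  obtain ⟨y, hy, hy₁⟩ : ∃ y, IsSegmentLift a z q y ∧ y 1 = transport a z q :=
    Classical.epsilon_spec (p := fun τ => ∃ y, IsSegmentLift a z q y ∧ y 1 = τ) ⟨_, x, hx, rfl⟩
  exact hy₁.symm.trans (ha.segmentLift_one_eq hz hq hy hx)

theorem transport_self (ha : IsBoundedSlopeOn a U K) (hz : z.1 ∈ U) : transport a z z.1 = z.2 :=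
  ha.transport_eq hz hz (x := fun _ => z.2)
    ⟨rfl, fun s _ => by simpa [segmentField] using hasDerivWithinAt_const s (Icc 0 1) z.2⟩

theorem isSegmentLift_transport (ha : IsBoundedSlopeOn a U K) (hz : z.1 ∈ U) (hq : q ∈ U) :
    IsSegmentLift a z q (fun s => transport a z (z.1 + s • (q - z.1))) := by
  obtain ⟨x, hx⟩ := ha.exists_isSegmentLift hz hq
  have heq : ∀ s ∈ Icc (0 : ℝ) 1, transport a z (z.1 + s • (q - z.1)) = x s := fun s hs => by
    simpa using
      ha.transport_eq hz (ha.convex.add_smul_sub_mem hz hq hs) (hx.comp_mul hs)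
  refine ⟨(heq 0 (left_mem_Icc.2 zero_le_one)).trans hx.1, fun s hs => ?_⟩
  simp only [heq s hs]
  exact (hx.2 s hs).congr heq (heq s hs)

theorem differentiableAt (ha : IsBoundedSlopeOn a U K) (hz : z ∈ U ×ˢ univ) :
    DifferentiableAt ℝ a z :=
  (ha.contDiffOn.differentiableOn one_ne_zero).differentiableAt (ha.isOpen_prod.mem_nhds hz)

theorem fderiv_segmentField_apply (ha : IsBoundedSlopeOn a U K) {p : E} {s t : ℝ}
    (hmem : p + s • (q - p) ∈ U) (ξ η τ : ℝ) (dp dq : E) :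
    fderiv ℝ (segmentField a) ((s, ξ), (p, t), q) ((0, η), (dp, τ), dq) =
      fderiv ℝ a (p + s • (q - p), ξ) (dp + s • (dq - dp), η) (q - p)
        + a (p + s • (q - p), ξ) (dq - dp) := by
  let w : (ℝ × ℝ) × (E × ℝ) × E := ((s, ξ), (p, t), q)
  have hp := (hasFDerivAt_snd (𝕜 := ℝ) (p := w)).fst.fst
  have hdir := (hasFDerivAt_snd (𝕜 := ℝ) (p := w)).snd.sub hp
  have hs := (hasFDerivAt_fst (𝕜 := ℝ) (p := w)).fst
  have hpoint := (hp.add (hs.smul hdir)).prodMk (hasFDerivAt_fst (𝕜 := ℝ) (p := w)).snd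
  have hfield : HasFDerivAt (segmentField a) _ w :=
    ((ha.differentiableAt ⟨hmem, mem_univ ξ⟩).hasFDerivAt.comp w hpoint).clm_apply hdir
  rw [hfield.fderiv]
  simp [w, add_comm]

theorem segmentPoint_mem (ha : IsBoundedSlopeOn a U K) (hz : z.1 ∈ U) (hq : q ∈ U) {s : ℝ}
    (hs : s ∈ Icc (0 : ℝ) 1) : segmentPoint a z q s ∈ U ×ˢ (univ : Set ℝ) :=
  ⟨ha.convex.add_smul_sub_mem hz hq hs, mem_univ _⟩

theorem hasDerivWithinAt_segmentPoint (ha : IsBoundedSlopeOn a U K) (hz : z.1 ∈ U) (hq : q ∈ U)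
    {s : ℝ} (hs : s ∈ Icc (0 : ℝ) 1) :
    HasDerivWithinAt (segmentPoint a z q) (q - z.1, a (segmentPoint a z q s) (q - z.1))
      (Icc 0 1) s := by
  have hbase : HasDerivAt (fun s : ℝ => z.1 + s • (q - z.1)) (q - z.1) s := by
    simpa using ((hasDerivAt_id s).smul_const (q - z.1)).const_add z.1
  exact hbase.hasDerivWithinAt.prodMk ((ha.isSegmentLift_transport hz hq).2 s hs)

theorem hasDerivWithinAt_holonomyFactor (ha : IsBoundedSlopeOn a U K) (hz : z.1 ∈ U) (hq : q ∈ U)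
    {s : ℝ} (hs : s ∈ Icc (0 : ℝ) 1) :
    HasDerivWithinAt (holonomyFactor a z q)
      (holonomyFactor a z q s * fderiv ℝ a (segmentPoint a z q s) (0, 1) (q - z.1))
      (Icc 0 1) s := by
  have hcont : ContinuousOn (fun σ => fderiv ℝ a (segmentPoint a z q σ) (0, 1)) (Icc 0 1) :=
    ((ha.contDiffOn.continuousOn_fderiv_of_isOpen ha.isOpen_prod le_rfl).comp
      (fun σ hσ => (ha.hasDerivWithinAt_segmentPoint hz hq hσ).continuousWithinAt)
      fun σ hσ => ha.segmentPoint_mem hz hq hσ).clm_apply continuousOn_const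
  have : Fact (s ∈ Icc (0 : ℝ) 1) := ⟨hs⟩
  have hint : HasDerivWithinAt
      (fun s => ∫ σ in (0 : ℝ)..s, fderiv ℝ a (segmentPoint a z q σ) (0, 1))
      (fderiv ℝ a (segmentPoint a z q s) (0, 1)) (Icc 0 1) s :=
    intervalIntegral.integral_hasDerivWithinAt_right
      ((hcont.mono (by rw [uIcc_of_le hs.1]; exact Icc_subset_Icc_right hs.2)).intervalIntegrable)
      (hcont.stronglyMeasurableAtFilter_nhdsWithin measurableSet_Icc s) (hcont s hs)
  exact (hint.clm_apply (hasDerivWithinAt_const s _ (q - z.1))).exp.congr_deriv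
    (by simp [holonomyFactor])

theorem transportVariation_zero (ha : IsBoundedSlopeOn a U K) (hz : z.1 ∈ U) :
    transportVariation a z q 0 =
      (ContinuousLinearMap.snd ℝ E ℝ).comp (.fst ℝ (E × ℝ) E) := by
  ext d <;> simp [transportVariation, holonomyFactor, contactForm, segmentPoint,
    ha.transport_self hz]

theorem fderiv_segmentField_transportVariation (ha : IsBoundedSlopeOn a U K)
    (hflat : IsFlatSlopeOn a U) (hz : z.1 ∈ U) (hq : q ∈ U) {s : ℝ} (hs : s ∈ Icc (0 : ℝ) 1)
    (d : (E × ℝ) × E) :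
    fderiv ℝ (segmentField a) ((s, (segmentPoint a z q s).2), z, q)
        ((0, transportVariation a z q s d), d) =
      fderiv ℝ a (segmentPoint a z q s) (q - z.1, a (segmentPoint a z q s) (q - z.1))
          (d.1.1 + s • (d.2 - d.1.1))
        + a (segmentPoint a z q s) (d.2 - d.1.1)
        + holonomyFactor a z q s * fderiv ℝ a (segmentPoint a z q s) (0, 1) (q - z.1)
          * contactForm a z d.1 := by
  obtain ⟨⟨dp, τ⟩, dq⟩ := d
  have hpoint := ha.segmentPoint_mem hz hq hs
  have hfrob := hflat _ hpoint (q - z.1) (dp + s • (dq - dp))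
  have hsplit : (dp + s • (dq - dp), transportVariation a z q s ((dp, τ), dq)) =
      (dp + s • (dq - dp), a (segmentPoint a z q s) (dp + s • (dq - dp)))
        + (holonomyFactor a z q s * contactForm a z (dp, τ)) • ((0 : E), (1 : ℝ)) := by
    simp [transportVariation]
  calc _ = fderiv ℝ a (segmentPoint a z q s)
          (dp + s • (dq - dp), transportVariation a z q s ((dp, τ), dq)) (q - z.1)
        + a (segmentPoint a z q s) (dq - dp) :=
      ha.fderiv_segmentField_apply hpoint.1 _ _ τ dp dq
    _ = _ := by
      rw [hsplit, map_add, map_smul, add_apply, smul_apply, ← hfrob, smul_eq_mul]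
      ring

theorem hasDerivWithinAt_transportVariation (ha : IsBoundedSlopeOn a U K)
    (hflat : IsFlatSlopeOn a U) (hz : z.1 ∈ U) (hq : q ∈ U) {s : ℝ} (hs : s ∈ Icc (0 : ℝ) 1) :
    HasDerivWithinAt (transportVariation a z q)
      ((fderiv ℝ (segmentField a) ((s, (segmentPoint a z q s).2), z, q)).comp
        (((0 : (E × ℝ) × E →L[ℝ] ℝ).prod (transportVariation a z q s)).prod
          (.id ℝ ((E × ℝ) × E)))) (Icc 0 1) s := by
  have hslope : HasDerivWithinAt (fun s => a (segmentPoint a z q s))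
      (fderiv ℝ a (segmentPoint a z q s) (q - z.1, a (segmentPoint a z q s) (q - z.1)))
      (Icc 0 1) s :=
    (ha.differentiableAt (ha.segmentPoint_mem hz hq hs)).hasFDerivAt.comp_hasDerivWithinAt s
      (ha.hasDerivWithinAt_segmentPoint hz hq hs)
  have hbase := ((hasDerivAt_id s).smul_const
    (.snd ℝ (E × ℝ) E - (ContinuousLinearMap.fst ℝ E ℝ).comp (.fst ℝ (E × ℝ) E))).const_add
    ((ContinuousLinearMap.fst ℝ E ℝ).comp (.fst ℝ (E × ℝ) E))
  refine ((hslope.clm_comp hbase.hasDerivWithinAt).add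
    ((ha.hasDerivWithinAt_holonomyFactor hz hq hs).smul_const _)).congr_deriv ?_
  refine ContinuousLinearMap.ext fun d => ?_
  refine Eq.trans ?_ (ha.fderiv_segmentField_transportVariation hflat hz hq hs d).symm
  simp

theorem transportVariation_one (d : (E × ℝ) × E) :
    transportVariation a z q 1 d =
      a (q, transport a z q) d.2 + holonomyFactor a z q 1 * contactForm a z d.1 := by
  simp [transportVariation, segmentPoint]

theorem eventually_mem_base (ha : IsBoundedSlopeOn a U K) (hz : z.1 ∈ U) (hq : q ∈ U) :
    ∀ᶠ θ : (E × ℝ) × E in 𝓝 (z, q), θ.1.1 ∈ U ∧ θ.2 ∈ U :=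
  ((ha.isOpen.preimage (by fun_prop : Continuous fun θ : (E × ℝ) × E => θ.1.1)).inter
    (ha.isOpen.preimage continuous_snd)).mem_nhds ⟨hz, hq⟩

theorem hasFDerivAt_transport_zero (ha : IsBoundedSlopeOn a U K) (hz : z.1 ∈ U) (hq : q ∈ U) :
    HasFDerivAt (fun θ : (E × ℝ) × E => transport a θ.1 (θ.1.1 + (0 : ℝ) • (θ.2 - θ.1.1)))
      (transportVariation a z q 0) (z, q) := by
  have hheight : HasFDerivAt (fun θ : (E × ℝ) × E => θ.1.2) (transportVariation a z q 0) (z, q) :=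
    (hasFDerivAt_fst.snd).congr_fderiv (ha.transportVariation_zero hz).symm
  refine hheight.congr_of_eventuallyEq ((ha.eventually_mem_base hz hq).mono fun θ hθ => ?_)
  simp only [zero_smul, add_zero]
  exact ha.transport_self hθ.1

theorem hasFDerivAt_transport (ha : IsBoundedSlopeOn a U K) (hflat : IsFlatSlopeOn a U)
    (hz : z.1 ∈ U) (hq : q ∈ U) :
    HasFDerivAt (fun θ : (E × ℝ) × E => transport a θ.1 θ.2) (transportVariation a z q 1)
      (z, q) := by
  set R := |z.2| + K * ‖q - z.1‖
  have hmem := ha.eventually_mem_base hz hq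
  have hlift : ∀ᶠ θ : (E × ℝ) × E in 𝓝 (z, q), IsSegmentLift a θ.1 θ.2
      (fun s => transport a θ.1 (θ.1.1 + s • (θ.2 - θ.1.1))) :=
    hmem.mono fun θ hθ => ha.isSegmentLift_transport hθ.1 hθ.2
  have hbound : ∀ᶠ θ : (E × ℝ) × E in 𝓝 (z, q), ∀ s ∈ Icc (0 : ℝ) 1,
      transport a θ.1 (θ.1.1 + s • (θ.2 - θ.1.1)) ∈ closedBall 0 (R + 1) := by
    have hcont : Continuous fun θ : (E × ℝ) × E => |θ.1.2| + K * ‖θ.2 - θ.1.1‖ := by fun_prop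
    filter_upwards [hmem, hlift, hcont.continuousAt.eventually_lt continuousAt_const
      (lt_add_one R)] with θ hθ hθlift hθR s hs
    rw [mem_closedBall_zero_iff]
    exact (ha.abs_segmentLift_le hθ.1 hθ.2 hθlift hs).trans hθR.le
  have hnhds : closedBall (0 : ℝ) (R + 1) ∈
      𝓝ˢ ((fun s : ℝ => transport a z (z.1 + s • (q - z.1))) '' Icc 0 1) := by
    refine mem_nhdsSet_iff_forall.2 (forall_mem_image.2 fun s hs => ?_)
    have hle := ha.abs_segmentLift_le hz hq (ha.isSegmentLift_transport hz hq) hs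
    exact closedBall_mem_nhds_of_mem (mem_ball_zero_iff.2 (hle.trans_lt (lt_add_one R)))
  obtain ⟨C, hC⟩ := ha.exists_eventually_lipschitzOnWith hz hq (R + 1)
  have hone := hasFDerivAt_of_eventually_isIntegralCurveOn (g := segmentField a) (θ₀ := (z, q))
    (x := fun θ s => transport a θ.1 (θ.1.1 + s • (θ.2 - θ.1.1)))
    zero_le_one (isOpen_setOf_segment_mem ha.isOpen) (contDiffOn_segmentField ha.contDiffOn)
    (hlift.mono fun θ hθ => hθ.2) (fun s hs => (ha.segmentPoint_mem hz hq hs).1) hC hbound hnhds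
    (fun s hs => ha.hasDerivWithinAt_transportVariation hflat hz hq hs)
    (ha.hasFDerivAt_transport_zero hz hq)
  simpa only [one_smul, add_sub_cancel] using hone

theorem hasFDerivAt_transport_right (ha : IsBoundedSlopeOn a U K) (hflat : IsFlatSlopeOn a U)
    (hz : z.1 ∈ U) (hq : q ∈ U) : HasFDerivAt (transport a z) (a (q, transport a z q)) q := by
  refine ((ha.hasFDerivAt_transport hflat hz hq).comp q
    (hasFDerivAt_prodMk_right z q)).congr_fderiv (ContinuousLinearMap.ext fun d => ?_)
  simp [transportVariation_one]

theorem transport_transport (ha : IsBoundedSlopeOn a U K) (hflat : IsFlatSlopeOn a U)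
    (hz : z.1 ∈ U) (hq : q ∈ U) {y : E} (hy : y ∈ U) :
    transport a (y, transport a z y) q = transport a z q := by
  have hderiv : ∀ y ∈ U, HasFDerivAt (fun y => transport a (y, transport a z y) q)
      (0 : E →L[ℝ] ℝ) y := by
    intro y hy
    have hpair := ((hasFDerivAt_id (𝕜 := ℝ) y).prodMk
      (ha.hasFDerivAt_transport_right hflat hz hy)).prodMk (hasFDerivAt_const q y)
    refine ((ha.hasFDerivAt_transport (z := (y, transport a z y)) hflat hy hq).comp y
      hpair).congr_fderiv (ContinuousLinearMap.ext fun d => ?_)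
    simp [transportVariation_one, contactForm]
  have hconst := ha.isOpen.is_const_of_fderiv_eq_zero ha.convex.isPreconnected
    (fun y hy => (hderiv y hy).differentiableAt.differentiableWithinAt)
    (fun y hy => (hderiv y hy).fderiv) hy hz
  rwa [ha.transport_self hz] at hconst

theorem contDiffOn_holonomyFactor_one (ha : IsBoundedSlopeOn a U K) {n : ℕ∞}
    (han : ContDiffOn ℝ (n + 1) a (U ×ˢ univ))
    (htransport : ContDiffOn ℝ n (fun θ : (E × ℝ) × E => transport a θ.1 θ.2)
      ((U ×ˢ univ) ×ˢ U)) :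
    ContDiffOn ℝ n (fun θ : (E × ℝ) × E => holonomyFactor a θ.1 θ.2 1) ((U ×ˢ univ) ×ˢ U) := by
  set W : Set (ℝ × (E × ℝ) × E) :=
    {w | w.2.1.1 ∈ U ∧ w.2.1.1 + w.1 • (w.2.2 - w.2.1.1) ∈ U}
  have hW : IsOpen W := (ha.isOpen.preimage (by fun_prop)).inter (ha.isOpen.preimage (by fun_prop))
  have hpoint : ContDiffOn ℝ n (fun w : ℝ × (E × ℝ) × E => segmentPoint a w.2.1 w.2.2 w.1) W := by
    have hbase : ContDiffOn ℝ n
        (fun w : ℝ × (E × ℝ) × E => w.2.1.1 + w.1 • (w.2.2 - w.2.1.1)) W := by fun_prop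
    refine hbase.prodMk (htransport.comp
      (f := fun w : ℝ × (E × ℝ) × E => (w.2.1, w.2.1.1 + w.1 • (w.2.2 - w.2.1.1)))
      (by fun_prop) fun w hw => ⟨⟨hw.1, mem_univ _⟩, hw.2⟩)
  have hderiv : ContDiffOn ℝ n
      (fun w : ℝ × (E × ℝ) × E => fderiv ℝ a (segmentPoint a w.2.1 w.2.2 w.1) (0, 1)) W :=
    ((((contDiffOn_succ_iff_fderiv_of_isOpen ha.isOpen_prod).1 han).2.2).comp hpoint
      fun w hw => ⟨hw.2, mem_univ _⟩).clm_apply contDiffOn_const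
  have hint := contDiffOn_intervalIntegral (a := 0) (b := 1) hW hderiv
    (ha.isOpen_prod.prod ha.isOpen) fun θ hθ s hs => ⟨hθ.1.1,
      ha.convex.add_smul_sub_mem hθ.1.1 hθ.2 (by rwa [uIcc_of_le zero_le_one] at hs)⟩
  exact (hint.clm_apply (by fun_prop)).exp

theorem contDiffOn_transport {n : ℕ∞} (ha : IsBoundedSlopeOn a U K) (hflat : IsFlatSlopeOn a U)
    (han : ContDiffOn ℝ n a (U ×ˢ univ)) :
    ContDiffOn ℝ n (fun θ : (E × ℝ) × E => transport a θ.1 θ.2) ((U ×ˢ univ) ×ˢ U) := by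
  have hderiv : ∀ θ ∈ (U ×ˢ (univ : Set ℝ)) ×ˢ U, HasFDerivAt
      (fun θ : (E × ℝ) × E => transport a θ.1 θ.2) (transportVariation a θ.1 θ.2 1) θ :=
    fun θ hθ => ha.hasFDerivAt_transport hflat hθ.1.1 hθ.2
  rw [contDiffOn_iff_forall_nat_le]
  intro k hk
  replace han : ContDiffOn ℝ k a (U ×ˢ univ) := han.of_le (mod_cast hk)
  clear hk
  induction k with
  | zero => exact contDiffOn_zero.2 fun θ hθ => (hderiv θ hθ).continuousAt.continuousWithinAt
  | succ k ih =>
    push_cast at han ⊢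
    have hk : ContDiffOn ℝ k a (U ×ˢ univ) := han.of_le (by simp)
    rw [contDiffOn_succ_iff_fderiv_of_isOpen (ha.isOpen_prod.prod ha.isOpen)]
    refine ⟨fun θ hθ => (hderiv θ hθ).differentiableAt.differentiableWithinAt, by simp, ?_⟩
    refine ContDiffOn.congr ?_ fun θ hθ => (hderiv θ hθ).fderiv
    have hend : ContDiffOn ℝ k (fun θ : (E × ℝ) × E => a (segmentPoint a θ.1 θ.2 1))
        ((U ×ˢ univ) ×ˢ U) := by
      simp only [segmentPoint, one_smul, add_sub_cancel]
      exact hk.comp (contDiffOn_snd.prodMk (ih hk)) fun θ hθ => ⟨hθ.2, mem_univ _⟩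
    have hstart : ContDiffOn ℝ k (fun θ : (E × ℝ) × E => contactForm a θ.1)
        ((U ×ˢ univ) ×ˢ U) :=
      contDiffOn_const.sub ((hk.comp contDiffOn_fst fun θ hθ => hθ.1).clm_comp contDiffOn_const)
    exact (hend.clm_comp contDiffOn_const).add
      ((ha.contDiffOn_holonomyFactor_one (n := k) han (ih hk)).smul
        (hstart.clm_comp contDiffOn_const))

theorem hasFDerivAt_transport_left (ha : IsBoundedSlopeOn a U K) (hflat : IsFlatSlopeOn a U)
    (hz : z.1 ∈ U) (hq : q ∈ U) :
    HasFDerivAt (fun z => transport a z q) (holonomyFactor a z q 1 • contactForm a z) z := by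
  refine ((ha.hasFDerivAt_transport hflat hz hq).comp (f := fun z => (z, q)) z
    (hasFDerivAt_prodMk_left z q)).congr_fderiv (ContinuousLinearMap.ext fun d => ?_)
  simp [transportVariation_one]

end IsBoundedSlopeOn

/-- `F` is a first integral of the slope field `a` over `U`: it is preserved by transport. -/
def IsTransportInvariant (a : E × ℝ → E →L[ℝ] ℝ) (F : E × ℝ → ℝ) (U : Set E) : Prop :=
  ∀ z ∈ U ×ˢ (univ : Set ℝ), ∀ q ∈ U, F (q, transport a z q) = F z

/-- Along the fibre over `p`, `F` is of class `C^n` and its differential is a nonzero multiple of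
`dt - a dp`, so that its level sets are integral hypersurfaces of `a`. -/
def IsRegularIntegralAt (n : ℕ∞) (a : E × ℝ → E →L[ℝ] ℝ) (F : E × ℝ → ℝ) (p : E) : Prop :=
  ∀ t, ContDiffAt ℝ n F (p, t) ∧ ∃ c : ℝ, c ≠ 0 ∧ HasFDerivAt F (c • contactForm a (p, t)) (p, t)

/-- Every point of `D` has a neighbourhood in `D` over which `a` is a bounded slope field. -/
def IsLocallyBoundedSlopeOn (a : E × ℝ → E →L[ℝ] ℝ) (D : Set E) : Prop :=
  ∀ p ∈ D, ∃ U K, p ∈ U ∧ U ⊆ D ∧ IsBoundedSlopeOn a U K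

variable {F : E × ℝ → ℝ} {n : ℕ∞} {p : E}

theorem IsRegularIntegralAt.contDiff_fiber (hF : IsRegularIntegralAt n a F p) :
    ContDiff ℝ n (fun t => F (p, t)) :=
  contDiff_iff_contDiffAt.2 fun t => (hF t).1.comp t (contDiffAt_const.prodMk contDiffAt_id)

theorem IsRegularIntegralAt.deriv_fiber_ne_zero (hF : IsRegularIntegralAt n a F p) (t : ℝ) :
    deriv (fun t => F (p, t)) t ≠ 0 := by
  obtain ⟨-, c, hc, hderiv⟩ := hF t
  have hfiber := hderiv.comp_hasDerivAt t ((hasDerivAt_const t p).prodMk (hasDerivAt_id t))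
  exact ne_of_eq_of_ne hfiber.deriv (by simpa [contactForm] using hc)

theorem IsTransportInvariant.isRegularIntegralAt (hF : IsTransportInvariant a F U)
    (ha : IsBoundedSlopeOn a U K) (hflat : IsFlatSlopeOn a U) (han : ContDiffOn ℝ n a (U ×ˢ univ))
    (hn : 1 ≤ n) (hp : p ∈ U) (hq : q ∈ U) (hsmooth : ContDiff ℝ n (fun t => F (q, t)))
    (hderiv : ∀ t, deriv (fun t => F (q, t)) t ≠ 0) : IsRegularIntegralAt n a F p := by
  intro t
  have hn₀ : (n : WithTop ℕ∞) ≠ 0 := mod_cast (zero_lt_one.trans_le hn).ne'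
  have hfactor : F =ᶠ[𝓝 (p, t)] (fun t => F (q, t)) ∘ fun z => transport a z q :=
    (ha.isOpen_prod.eventually_mem ⟨hp, mem_univ t⟩).mono fun z hz => (hF z hz q hq).symm
  have htransport : ContDiffAt ℝ n (fun z => transport a z q) (p, t) :=
    ((ha.contDiffOn_transport hflat han).contDiffAt ((ha.isOpen_prod.prod ha.isOpen).mem_nhds
      ⟨⟨hp, mem_univ t⟩, hq⟩)).comp (p, t) (contDiffAt_id.prodMk contDiffAt_const)
  refine ⟨(hsmooth.contDiffAt.comp _ htransport).congr_of_eventuallyEq hfactor,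
    deriv (fun t => F (q, t)) (transport a (p, t) q) * holonomyFactor a (p, t) q 1,
    mul_ne_zero (hderiv _) (Real.exp_ne_zero _), ?_⟩
  have hchain := (hsmooth.differentiable hn₀ (transport a (p, t) q)).hasDerivAt.comp_hasFDerivAt
    (p, t) (ha.hasFDerivAt_transport_left hflat hp hq)
  rw [smul_smul] at hchain
  exact hchain.congr_of_eventuallyEq hfactor

theorem IsLocallyBoundedSlopeOn.isOpen {D : Set E} (ha : IsLocallyBoundedSlopeOn a D) :
    IsOpen D :=
  isOpen_iff_forall_mem_open.2 fun p hp =>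
    let ⟨U, _, hpU, hUD, haU⟩ := ha p hp
    ⟨U, hUD, haU.isOpen, hpU⟩

theorem IsFlatSlopeOn.mono {D : Set E} (hflat : IsFlatSlopeOn a D) (hUD : U ⊆ D) :
    IsFlatSlopeOn a U :=
  fun z hz => hflat z ⟨hUD hz.1, hz.2⟩

theorem IsLocallyBoundedSlopeOn.exists_isTransportInvariant {D : Set E}
    (ha : IsLocallyBoundedSlopeOn a D) (hflat : IsFlatSlopeOn a D) [SimplyConnectedSpace D]
    (hp : p ∈ D) :
    ∃ F : E × ℝ → ℝ, (∀ t, F (p, t) = t) ∧ ∀ q ∈ D, ∃ U K, q ∈ U ∧ U ⊆ D ∧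
      IsBoundedSlopeOn a U K ∧ IsTransportInvariant a F U := by
  classical
  have := ha.isOpen.locallyPathConnectedSpace
  choose U K hmem hUD hU using fun p : D => ha p p.2
  let L : LocalTransport D ℝ :=
    { baseSet := fun p => (Subtype.val : D → E) ⁻¹' U p
      isOpen_baseSet := fun p => (hU p).isOpen.preimage continuous_subtype_val
      mem_baseSet := fun p => hmem p
      isPreconnected_baseSet := fun p => by
        rw [← IsInducing.subtypeVal.isPreconnected_image, Subtype.image_preimage_coe,
          inter_eq_right.2 (hUD p)]
        exact (hU p).convex.isPreconnected
      transport := fun x τ y => transport a (x, τ) y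
      transport_self := fun x τ => (hU x).transport_self (z := ((x : E), τ)) (hmem x)
      transport_transport := fun i x hx y hy z hz τ =>
        (hU i).transport_transport (z := ((x : E), τ)) (hflat.mono (hUD i)) hx hz hy }
  obtain ⟨f, hf, hinv⟩ := L.exists_invariant ⟨p, hp⟩
  refine ⟨fun z => if hz : z.1 ∈ D then f ⟨z.1, hz⟩ z.2 else 0, fun t => by simp [hp, hf],
    fun q hq => ⟨U ⟨q, hq⟩, K ⟨q, hq⟩, hmem _, hUD _, hU _, fun z hz y hy => ?_⟩⟩
  have hzD := hUD _ hz.1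
  have hyD := hUD _ hy
  simpa [hzD, hyD] using hinv ⟨q, hq⟩ ⟨z.1, hzD⟩ hz.1 ⟨y, hyD⟩ hy z.2

theorem IsLocallyBoundedSlopeOn.exists_isRegularIntegralAt {D : Set E}
    (ha : IsLocallyBoundedSlopeOn a D) (hflat : IsFlatSlopeOn a D) [SimplyConnectedSpace D]
    (han : ContDiffOn ℝ n a (D ×ˢ univ)) (hn : 1 ≤ n) :
    ∃ F : E × ℝ → ℝ, ∀ p ∈ D, IsRegularIntegralAt n a F p := by
  obtain ⟨p₀, hp₀⟩ : D.Nonempty := nonempty_coe_sort.1 inferInstance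
  obtain ⟨F, hF₀, hF⟩ := ha.exists_isTransportInvariant hflat hp₀
  have hspread : ∀ p ∈ D, ∃ V ∈ 𝓝 p, p ∈ V ∧ ∀ x ∈ V, ∀ y ∈ V,
      ContDiff ℝ n (fun t => F (x, t)) → (∀ t, deriv (fun t => F (x, t)) t ≠ 0) →
        IsRegularIntegralAt n a F y := by
    intro p hp
    obtain ⟨U, K, hpU, hUD, hU, hFU⟩ := hF p hp
    refine ⟨U, hU.isOpen.mem_nhds hpU, hpU, fun x hx y hy => ?_⟩
    exact hFU.isRegularIntegralAt hU (hflat.mono hUD) (han.mono (prod_mono_left hUD)) hn hy hx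
  have hbase : IsRegularIntegralAt n a F p₀ := by
    obtain ⟨V, -, hpV, hV⟩ := hspread p₀ hp₀
    refine hV p₀ hpV p₀ hpV ?_ ?_
    · simpa only [hF₀] using contDiff_fun_id
    · simp [hF₀]
  have hconn : IsPreconnected D := isPreconnected_iff_preconnectedSpace.2 inferInstance
  refine ⟨F, fun p hp => (hconn.induction₂
    (fun x y => IsRegularIntegralAt n a F x ↔ IsRegularIntegralAt n a F y) (fun x hx => ?_)
    (fun _ _ _ _ _ _ => Iff.trans) (fun _ _ _ _ => Iff.symm) hp₀ hp).1 hbase⟩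
  obtain ⟨V, hVx, hxV, hV⟩ := hspread x hx
  filter_upwards [mem_nhdsWithin_of_mem_nhds hVx] with y hy
  exact ⟨fun h => hV x hxV y hy h.contDiff_fiber h.deriv_fiber_ne_zero,
    fun h => hV y hy x hxV h.contDiff_fiber h.deriv_fiber_ne_zero⟩

end SlopeField

section OneForm

variable {E : Type u} [NormedAddCommGroup E] [NormedSpace ℝ E]

/-- The slope field of the kernels of the one-form `ω`, for `ω` nonzero on the vertical vector
`(0, 1)`; it is `0` where `ω` vanishes on that vector. -/
noncomputable def kernelSlope (ω : E × ℝ → E × ℝ →L[ℝ] ℝ) (z : E × ℝ) : E →L[ℝ] ℝ :=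
  -(ω z (0, 1))⁻¹ • (ω z).comp (.inl ℝ E ℝ)

/-- The Frobenius condition `ω ∧ dω = 0`, stated as the vanishing of `dω` on `ker ω`. -/
def IsIntegrableFormOn {H : Type*} [NormedAddCommGroup H] [NormedSpace ℝ H]
    (ω : H → H →L[ℝ] ℝ) (s : Set H) : Prop :=
  ∀ x ∈ s, ∀ X Y, ω x X = 0 → ω x Y = 0 → fderiv ℝ ω x X Y = fderiv ℝ ω x Y X

variable {ω : E × ℝ → E × ℝ →L[ℝ] ℝ} {D : Set E} {z : E × ℝ}

theorem smul_contactForm_kernelSlope (hz : ω z (0, 1) ≠ 0) :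
    ω z (0, 1) • contactForm (kernelSlope ω) z = ω z := by
  refine ContinuousLinearMap.ext fun w => ?_
  have hsplit : ω z w = ω z (w.1, 0) + w.2 * ω z (0, 1) := by
    rw [← smul_eq_mul, ← map_smul, ← map_add]
    simp
  simp only [contactForm, kernelSlope, smul_apply, sub_apply,
    ContinuousLinearMap.coe_snd', ContinuousLinearMap.comp_apply, ContinuousLinearMap.coe_fst',
    ContinuousLinearMap.inl_apply, smul_eq_mul, hsplit]
  field_simp
  ring

theorem apply_kernelSlope_eq_zero (hz : ω z (0, 1) ≠ 0) (w : E) :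
    ω z (w, kernelSlope ω z w) = 0 := by
  rw [← smul_contactForm_kernelSlope hz]
  simp [contactForm]

theorem contDiffOn_kernelSlope {n : WithTop ℕ∞} {s : Set (E × ℝ)} (hω : ContDiffOn ℝ n ω s)
    (hvert : ∀ z ∈ s, ω z (0, 1) ≠ 0) : ContDiffOn ℝ n (kernelSlope ω) s :=
  ((hω.clm_apply contDiffOn_const).inv hvert).neg.smul (hω.clm_comp contDiffOn_const)

theorem apply_vertical_mul_fderiv_kernelSlope {s : Set (E × ℝ)} (hs : IsOpen s)
    (hω : ContDiffOn ℝ 1 ω s) (hvert : ∀ z ∈ s, ω z (0, 1) ≠ 0) (hz : z ∈ s) (d : E × ℝ) (w : E) :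
    ω z (0, 1) * fderiv ℝ (kernelSlope ω) z d w =
      -fderiv ℝ ω z d (w, kernelSlope ω z w) := by
  have hdiff : ∀ {G : Type u} [NormedAddCommGroup G] [NormedSpace ℝ G] {g : E × ℝ → G},
      ContDiffOn ℝ 1 g s → HasFDerivAt g (fderiv ℝ g z) z := fun hg =>
    ((hg.contDiffAt (hs.mem_nhds hz)).differentiableAt one_ne_zero).hasFDerivAt
  have hlift := (hasFDerivAt_const w z).prodMk
    ((hdiff (contDiffOn_kernelSlope hω hvert)).clm_apply (hasFDerivAt_const w z))
  have hzero : (fun z => ω z (w, kernelSlope ω z w)) =ᶠ[𝓝 z] fun _ => (0 : ℝ) :=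
    (hs.eventually_mem hz).mono fun z hz => apply_kernelSlope_eq_zero (hvert z hz) w
  have hderiv := DFunLike.congr_fun (((hdiff hω).clm_apply hlift).unique
    ((hasFDerivAt_const (0 : ℝ) z).congr_of_eventuallyEq hzero)) d
  have hvertical : ω z (0, fderiv ℝ (kernelSlope ω) z d w) =
      ω z (0, 1) * fderiv ℝ (kernelSlope ω) z d w := by
    rw [mul_comm, ← smul_eq_mul, ← map_smul]
    simp
  simp only [ContinuousLinearMap.comp_zero, zero_add, add_apply, ContinuousLinearMap.comp_apply,
    ContinuousLinearMap.prod_apply, zero_apply, ContinuousLinearMap.flip_apply] at hderiv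
  linarith

theorem IsIntegrableFormOn.isFlatSlopeOn_kernelSlope (hint : IsIntegrableFormOn ω (D ×ˢ univ))
    (hD : IsOpen D) (hω : ContDiffOn ℝ 1 ω (D ×ˢ univ))
    (hvert : ∀ z ∈ D ×ˢ (univ : Set ℝ), ω z (0, 1) ≠ 0) :
    IsFlatSlopeOn (kernelSlope ω) D := by
  intro z hz u w
  have hfderiv := apply_vertical_mul_fderiv_kernelSlope (hD.prod isOpen_univ) hω hvert hz
  refine mul_left_cancel₀ (hvert z hz) ?_
  rw [hfderiv, hfderiv, hint z hz _ _ (apply_kernelSlope_eq_zero (hvert z hz) u)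
    (apply_kernelSlope_eq_zero (hvert z hz) w)]

theorem isLocallyBoundedSlopeOn_kernelSlope (hD : IsOpen D) (hω : ContDiffOn ℝ 1 ω (D ×ˢ univ))
    (hvert : ∀ z ∈ D ×ˢ (univ : Set ℝ), ω z (0, 1) ≠ 0)
    (hbound : ∀ p ∈ D, ∃ C, ∀ᶠ p' in 𝓝 p, ∀ t w,
      |ω (p', t) (w, 0)| ≤ C * ‖w‖ * |ω (p', t) (0, 1)|) :
    IsLocallyBoundedSlopeOn (kernelSlope ω) D := by
  intro p hp
  obtain ⟨C, hC⟩ := hbound p hp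
  obtain ⟨ε, hε, hball⟩ := Metric.eventually_nhds_iff_ball.1 ((hD.eventually_mem hp).and hC)
  refine ⟨ball p ε, C.toNNReal, mem_ball_self hε, fun p' hp' => (hball p' hp').1, ?_⟩
  refine ⟨isOpen_ball, convex_ball p ε, (contDiffOn_kernelSlope hω hvert).mono
    (prod_mono_left fun p' hp' => (hball p' hp').1), fun z hz => ?_⟩
  refine ContinuousLinearMap.opNorm_le_bound _ NNReal.zero_le_coe fun w => ?_
  have hpos : 0 < |ω z (0, 1)| := abs_pos.2 (hvert z ⟨(hball z.1 hz.1).1, hz.2⟩)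
  calc ‖kernelSlope ω z w‖ = |ω z (w, 0)| / |ω z (0, 1)| := by
        simp [kernelSlope, div_eq_inv_mul]
    _ ≤ C * ‖w‖ := (div_le_iff₀ hpos).2 ((hball z.1 hz.1).2 z.2 w)
    _ ≤ C.toNNReal * ‖w‖ := by gcongr; exact Real.le_coe_toNNReal C

theorem exists_integratingFactor {r : ℕ∞} (hr : 1 ≤ r) (hD : IsOpen D) [SimplyConnectedSpace D]
    (hω : ContDiffOn ℝ r ω (D ×ˢ univ)) (hvert : ∀ z ∈ D ×ˢ (univ : Set ℝ), ω z (0, 1) ≠ 0)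
    (hbound : ∀ p ∈ D, ∃ C, ∀ᶠ p' in 𝓝 p, ∀ t w,
      |ω (p', t) (w, 0)| ≤ C * ‖w‖ * |ω (p', t) (0, 1)|)
    (hint : IsIntegrableFormOn ω (D ×ˢ univ)) :
    ∃ f lam : E × ℝ → ℝ, ContDiffOn ℝ r f (D ×ˢ univ) ∧
      ContDiffOn ℝ ((r - 1 : ℕ∞) : WithTop ℕ∞) lam (D ×ˢ univ) ∧
      ∀ z ∈ D ×ˢ (univ : Set ℝ), lam z ≠ 0 ∧ HasFDerivAt f (lam z • ω z) z := by
  have hω₁ := hω.of_le (m := 1) (mod_cast hr)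
  obtain ⟨f, hf⟩ := (isLocallyBoundedSlopeOn_kernelSlope hD hω₁ hvert
    hbound).exists_isRegularIntegralAt (hint.isFlatSlopeOn_kernelSlope hD hω₁ hvert)
      (contDiffOn_kernelSlope hω hvert) hr
  have hfr : ContDiffOn ℝ r f (D ×ˢ univ) := fun z hz => (hf z.1 hz.1 z.2).1.contDiffWithinAt
  refine ⟨f, fun z => fderiv ℝ f z (0, 1) / ω z (0, 1), hfr, ?_, fun z hz => ?_⟩
  · have hsub : ((r - 1 : ℕ∞) : WithTop ℕ∞) + 1 ≤ r := mod_cast (tsub_add_cancel_of_le hr).le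
    exact ((hfr.fderiv_of_isOpen (hD.prod isOpen_univ) hsub).clm_apply contDiffOn_const).div
      ((hω.of_le (le_self_add.trans hsub)).clm_apply contDiffOn_const) hvert
  · obtain ⟨-, c, hc, hderiv⟩ := hf z.1 hz.1 z.2
    have hvertical : fderiv ℝ f z (0, 1) = c := by simp [hderiv.fderiv, contactForm]
    refine ⟨div_ne_zero (hvertical.trans_ne hc) (hvert z hz), ?_⟩
    refine hderiv.congr_fderiv ?_
    dsimp only
    rw [hvertical, div_eq_mul_inv, mul_smul,
      (inv_smul_eq_iff₀ (hvert z hz)).2 (smul_contactForm_kernelSlope (hvert z hz)).symm]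

end OneForm

section Pullback

variable {H : Type*} [NormedAddCommGroup H] [NormedSpace ℝ H]
  {G : Type*} [NormedAddCommGroup G] [NormedSpace ℝ G]

/-- The pullback of the one-form `ω` along the linear map `J`. -/
def linearPullback (J : G →L[ℝ] H) (ω : H → H →L[ℝ] ℝ) (z : G) : G →L[ℝ] ℝ :=
  (ω (J z)).comp J

variable {J : G →L[ℝ] H} {ω : H → H →L[ℝ] ℝ} {s : Set H}

theorem contDiffOn_linearPullback {n : WithTop ℕ∞} (hω : ContDiffOn ℝ n ω s) :
    ContDiffOn ℝ n (linearPullback J ω) (J ⁻¹' s) :=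
  (hω.comp J.contDiff.contDiffOn fun _ hz => hz).clm_comp contDiffOn_const

theorem IsIntegrableFormOn.pullback (hint : IsIntegrableFormOn ω s) (hs : IsOpen s)
    (hω : ContDiffOn ℝ 1 ω s) : IsIntegrableFormOn (linearPullback J ω) (J ⁻¹' s) := by
  intro z hz X Y hX hY
  have hdiff := (hω.contDiffAt (hs.mem_nhds hz)).differentiableAt one_ne_zero
  have hderiv := (hdiff.hasFDerivAt.comp z J.hasFDerivAt).clm_comp (hasFDerivAt_const J z)
  have hfderiv : ∀ X Y, fderiv ℝ (linearPullback J ω) z X Y = fderiv ℝ ω (J z) (J X) (J Y) :=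
    fun X Y => by
      rw [show fderiv ℝ (linearPullback J ω) z = _ from hderiv.fderiv]
      simp
  rw [hfderiv, hfderiv, hint (J z) hz (J X) (J Y) hX hY]

end Pullback

section Coordinates

open Matrix

theorem dotProduct_mulVec_eq_zero_of_wedge {ι R : Type*} [Fintype ι] [CommRing R] [IsDomain R]
    {V X Y : ι → R} {A : Matrix ι ι R} {l : ι} (hl : V l ≠ 0)
    (hA : ∀ j k, V l * A j k - V j * A l k + V k * A l j = 0)
    (hX : V ⬝ᵥ X = 0) (hY : V ⬝ᵥ Y = 0) : X ⬝ᵥ A *ᵥ Y = 0 := by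
  have hwedge : V l • A = vecMulVec V (A l) - vecMulVec (A l) V := by
    ext j k
    simpa [vecMulVec_apply] using by linear_combination hA j k
  refine (mul_eq_zero.1 ?_).resolve_left hl
  rw [← smul_eq_mul, ← dotProduct_smul, ← smul_mulVec, hwedge, sub_mulVec, vecMulVec_mulVec,
    vecMulVec_mulVec, hY]
  simp [dotProduct_comm X V, hX]

/-- The one-form `∑ k, v k dx_k` with coefficient vector field `v`. -/
noncomputable def coordForm {m : ℕ} (v : (Fin m → ℝ) → Fin m → ℝ) (x : Fin m → ℝ) :
    (Fin m → ℝ) →L[ℝ] ℝ :=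
  (ContinuousLinearEquiv.piRing (𝕜 := ℝ) (E := ℝ) (Fin m)).symm (v x)

variable {m : ℕ} {v : (Fin m → ℝ) → Fin m → ℝ} {M : Set (Fin m → ℝ)}

theorem coordForm_apply (x u : Fin m → ℝ) : coordForm v x u = v x ⬝ᵥ u :=
  (LinearEquiv.piRing_symm_apply ℝ (v x) u).trans (dotProduct_comm u (v x))

theorem contDiffOn_coordForm {n : WithTop ℕ∞} (hv : ContDiffOn ℝ n v M) :
    ContDiffOn ℝ n (coordForm v) M :=
  (ContinuousLinearEquiv.contDiff _).comp_contDiffOn hv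

theorem fderiv_coordForm_apply (x X Y : Fin m → ℝ) :
    fderiv ℝ (coordForm v) x X Y = fderiv ℝ v x X ⬝ᵥ Y := by
  rw [show fderiv ℝ (coordForm v) x = _ from ContinuousLinearEquiv.comp_fderiv _]
  exact coordForm_apply (v := fun _ => fderiv ℝ v x X) x Y

theorem isIntegrableFormOn_coordForm {l : Fin m} (hl : ∀ x ∈ M, v x l ≠ 0)
    (hint : ∀ x ∈ M, ∀ j k,
      v x l * (fderiv ℝ v x (Pi.single j 1) k - fderiv ℝ v x (Pi.single k 1) j)
        - v x j * (fderiv ℝ v x (Pi.single l 1) k - fderiv ℝ v x (Pi.single k 1) l)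
        + v x k * (fderiv ℝ v x (Pi.single l 1) j - fderiv ℝ v x (Pi.single j 1) l) = 0) :
    IsIntegrableFormOn (coordForm v) M := by
  intro x hx X Y hX hY
  set B := LinearMap.toMatrix' (fderiv ℝ v x).toLinearMap
  have hfderiv : ∀ X Y, fderiv ℝ (coordForm v) x X Y = Y ⬝ᵥ B *ᵥ X := fun X Y => by
    rw [fderiv_coordForm_apply, LinearMap.toMatrix'_mulVec, dotProduct_comm]
    rfl
  have hzero : X ⬝ᵥ (Bᵀ - B) *ᵥ Y = 0 :=
    dotProduct_mulVec_eq_zero_of_wedge (hl x hx) (hint x hx)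
      ((coordForm_apply x X).symm.trans hX) ((coordForm_apply x Y).symm.trans hY)
  rw [hfderiv, hfderiv, ← sub_eq_zero, ← hzero, sub_mulVec, dotProduct_sub,
    dotProduct_transpose_mulVec]

/-- The identification of `ℝⁿ × ℝ` with `ℝⁿ⁺¹` that appends the last coordinate. -/
noncomputable def snocL (n : ℕ) : ((Fin n → ℝ) × ℝ) ≃L[ℝ] (Fin (n + 1) → ℝ) :=
  LinearEquiv.toContinuousLinearEquiv
    { (Equiv.prodComm _ _).trans (Fin.snocEquiv fun _ => ℝ) with
      map_add' := fun x y => by ext k; refine Fin.lastCases ?_ (fun i => ?_) k <;> simp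
      map_smul' := fun c x => by ext k; refine Fin.lastCases ?_ (fun i => ?_) k <;> simp }

theorem snocL_apply (n : ℕ) (w : Fin n → ℝ) (t : ℝ) : snocL n (w, t) = Fin.snoc w t := rfl

theorem coordForm_snocL {n : ℕ} {v : (Fin (n + 1) → ℝ) → Fin (n + 1) → ℝ} (x : Fin (n + 1) → ℝ)
    (w : Fin n → ℝ) (t : ℝ) :
    coordForm v x (snocL n (w, t)) = ∑ i, v x (Fin.castSucc i) * w i + v x (Fin.last n) * t := by
  simp [coordForm_apply, snocL_apply, dotProduct, Fin.sum_univ_castSucc]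

theorem abs_coordForm_snocL_le {n : ℕ} {v : (Fin (n + 1) → ℝ) → Fin (n + 1) → ℝ}
    {x : Fin (n + 1) → ℝ} {C : ℝ}
    (hC : ∀ i : Fin n, |v x i.castSucc| ≤ C * |v x (Fin.last n)|) (w : Fin n → ℝ) :
    |coordForm v x (snocL n (w, 0))| ≤ n * C * ‖w‖ * |coordForm v x (snocL n (0, 1))| := by
  have hterm : ∀ i, |v x (Fin.castSucc i) * w i| ≤ C * |v x (Fin.last n)| * ‖w‖ := fun i => by
    rw [abs_mul]
    exact mul_le_mul (hC i) (norm_le_pi_norm w i) (abs_nonneg _) ((abs_nonneg _).trans (hC i))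
  calc |coordForm v x (snocL n (w, 0))| = |∑ i, v x (Fin.castSucc i) * w i| := by
        simp [coordForm_snocL]
    _ ≤ n * (C * |v x (Fin.last n)| * ‖w‖) :=
      (Finset.abs_sum_le_sum_abs _ _).trans <|
        (Finset.sum_le_card_nsmul _ _ _ fun i _ => hterm i).trans_eq (by simp)
    _ = n * C * ‖w‖ * |coordForm v x (snocL n (0, 1))| := by
      simp only [coordForm_snocL, Pi.zero_apply, mul_zero, Finset.sum_const_zero, zero_add, mul_one]
      ring

end Coordinates

end EulerMultiplier

open EulerMultiplier

theorem euler_multiplier_on_cylinder_general {E : Type u} [NormedAddCommGroup E] [NormedSpace ℝ E]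
    {H : Type*} [NormedAddCommGroup H] [NormedSpace ℝ H] (J : (E × ℝ) ≃L[ℝ] H)
    {D : Set E} (hD : IsOpen D) [SimplyConnectedSpace D] {r : ℕ∞} (hr : 1 ≤ r)
    {M : Set H} (hM : M = {x | (J.symm x).1 ∈ D}) {ω : H → H →L[ℝ] ℝ} (hω : ContDiffOn ℝ r ω M)
    (hvert : ∀ x ∈ M, ω x (J (0, 1)) ≠ 0)
    (hbound : ∀ p ∈ D, ∃ C, ∀ᶠ p' in 𝓝 p, ∀ t w,
      |ω (J (p', t)) (J (w, 0))| ≤ C * ‖w‖ * |ω (J (p', t)) (J (0, 1))|)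
    (hint : IsIntegrableFormOn ω M) :
    ∃ f lam : H → ℝ, ContDiffOn ℝ r f M ∧ ContDiffOn ℝ ((r - 1 : ℕ∞) : WithTop ℕ∞) lam M ∧
      (∀ x ∈ M, lam x ≠ 0) ∧ ∀ x ∈ M, HasFDerivAt f (lam x • ω x) x := by
  have hMopen : IsOpen M := hM ▸ hD.preimage (by fun_prop)
  have hpre : J ⁻¹' M = D ×ˢ univ := by ext z; simp [hM]
  have hmaps : MapsTo J.symm M (D ×ˢ univ) := fun x hx => ⟨by rwa [hM] at hx, mem_univ _⟩
  obtain ⟨f, lam, hf, hlam, hdf⟩ := exists_integratingFactor (ω := linearPullback J ω) hr hD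
    (hpre ▸ contDiffOn_linearPullback hω) (fun z hz => hvert (J z) (hpre.ge hz)) hbound
    (hpre ▸ hint.pullback hMopen (hω.of_le (mod_cast hr)))
  refine ⟨f ∘ J.symm, lam ∘ J.symm, hf.comp J.symm.contDiff.contDiffOn hmaps,
    hlam.comp J.symm.contDiff.contDiffOn hmaps, fun x hx => (hdf _ (hmaps hx)).1, fun x hx => ?_⟩
  refine ((hdf _ (hmaps hx)).2.comp x J.symm.hasFDerivAt).congr_fderiv ?_
  ext w
  simp [linearPullback]

/-- Global existence of Euler's multiplier on an infinite cylinder `M = D × ℝ` over a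
simply connected domain `D ⊆ ℝⁿ`, for a one-form `ω = Σ v^k dx_k` with nonvanishing
last component, bounded ratios `|v^i/v^{n+1}|` and satisfying the integrability
condition `ω ∧ dω = 0`. -/
theorem euler_multiplier_on_cylinder
    (n : ℕ) (hn : 1 ≤ n)
    (D : Set (Fin n → ℝ)) (hDopen : IsOpen D) (hDconn : IsConnected D)
    (hDsc : SimplyConnectedSpace D)
    (r : ℕ∞) (hr : 1 ≤ r)
    (v : (Fin (n + 1) → ℝ) → (Fin (n + 1) → ℝ))
    (M : Set (Fin (n + 1) → ℝ)) (hM : M = {x | (fun i : Fin n => x i.castSucc) ∈ D})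
    (hv : ContDiffOn ℝ (r : WithTop ℕ∞) v M)
    (hvlast : ∀ x ∈ M, v x (Fin.last n) ≠ 0)
    (hbound : ∃ C : ℝ, 0 < C ∧ ∀ x ∈ M, ∀ i : Fin n,
      |v x i.castSucc| ≤ C * |v x (Fin.last n)|)
    (hint : ∀ x ∈ M, ∀ i j k : Fin (n + 1),
      v x i * (fderiv ℝ v x (Pi.single j 1) k - fderiv ℝ v x (Pi.single k 1) j)
        - v x j * (fderiv ℝ v x (Pi.single i 1) k - fderiv ℝ v x (Pi.single k 1) i)
        + v x k * (fderiv ℝ v x (Pi.single i 1) j - fderiv ℝ v x (Pi.single j 1) i)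
        = 0) :
    ∃ (f : (Fin (n + 1) → ℝ) → ℝ) (lam : (Fin (n + 1) → ℝ) → ℝ),
      ContDiffOn ℝ (r : WithTop ℕ∞) f M ∧
      ContDiffOn ℝ ((r - 1 : ℕ∞) : WithTop ℕ∞) lam M ∧
      (∀ x ∈ M, lam x ≠ 0) ∧
      ∀ x ∈ M, ∀ u : Fin (n + 1) → ℝ,
        fderiv ℝ f x u = lam x * ∑ k, v x k * u k := by
  obtain ⟨C, -, hC⟩ := hbound
  obtain ⟨f, lam, hf, hlam, hne, hdf⟩ := euler_multiplier_on_cylinder_general (snocL n) hDopen hr hM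
    (contDiffOn_coordForm hv) (fun x hx => by simpa [coordForm_snocL] using hvlast x hx)
    (fun p hp => ⟨n * C, (hDopen.eventually_mem hp).mono fun p' hp' t w =>
      abs_coordForm_snocL_le (hC _ (by simpa [hM, snocL_apply] using hp')) w⟩)
    (isIntegrableFormOn_coordForm hvlast fun x hx => hint x hx (Fin.last n))
  refine ⟨f, lam, hf, hlam, hne, fun x hx u => ?_⟩
  rw [(hdf x hx).fderiv, smul_apply, coordForm_apply, smul_eq_mul, dotProduct]
end

section
/- Every nonempty, connected, non-compact, Hausdorff, second-countable topological manifold of dimension 1 (without boundary) is homeomorphic to ℝ. -/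
/-!
An open arc is the image of an open embedding `ℝ → X`. If two open arcs meet and neither contains
the other, then each of them enters the other through a whole end. If these two overlapping ends
are the only overlap, the arcs concatenate to a longer arc; otherwise the two arcs close up to a
circle, which is compact and open, hence everything. So in a connected noncompact `1`-manifold
any two points, and then any two open arcs, lie in a common open arc.

Given a dense sequence, one successively enlarges an arc to swallow its points, reparametrizing so
that the `n`-th embedding is never changed again on `[-n, n]`. The limit is an open arc with dense
range. It is everything: inside any larger open arc, it is a dense interval of `ℝ`.
-/

open Set Topology Filter Function TopologicalSpace

namespace OneManifold

section Order

variable {α δ : Type*} [ConditionallyCompleteLinearOrder α] [TopologicalSpace α] [OrderTopology α]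
  [DenselyOrdered α] [LinearOrder δ] [TopologicalSpace δ] {φ : α → δ} {s : Set α}

lemma strictMonoOn_or_strictAntiOn_of_injOn [OrderClosedTopology δ] [s.OrdConnected]
    (hs : s.Nonempty) (hc : ContinuousOn φ s) (hi : InjOn φ s) :
    StrictMonoOn φ s ∨ StrictAntiOn φ s := by
  have : Inhabited s := Classical.inhabited_of_nonempty hs.to_subtype
  exact (hc.domRestrict.strictMono_of_inj hi.injective).imp
    strictMono_domRestrict.mp strictAntiOn_iff_strictAnti.mpr

lemma image_mem_nhds_of_continuousOn_injOn [NoMinOrder α] [NoMaxOrder α] [OrderTopology δ]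
    {t : α} (hs : s ∈ 𝓝 t) (hc : ContinuousOn φ s) (hi : InjOn φ s) : φ '' s ∈ 𝓝 (φ t) := by
  obtain ⟨a, b, -, hab, hsub⟩ := exists_Icc_mem_subset_of_mem_nhds hs
  obtain ⟨hat, htb⟩ := Icc_mem_nhds_iff.1 hab
  have hle : a ≤ b := (hat.trans htb).le
  have ha : a ∈ Icc a b := left_mem_Icc.2 hle
  have hb : b ∈ Icc a b := right_mem_Icc.2 hle
  have ht : t ∈ Icc a b := ⟨hat.le, htb.le⟩
  refine mem_of_superset ?_ (image_mono hsub)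
  rcases (hc.mono hsub).strictMonoOn_of_injOn_Icc' hle (hi.mono hsub) with hm | hm
  · exact mem_of_superset (Icc_mem_nhds (hm ha ht hat) (hm ht hb htb))
      (intermediate_value_Icc hle (hc.mono hsub))
  · exact mem_of_superset (Icc_mem_nhds (hm ht hb htb) (hm ha ht hat))
      (intermediate_value_Icc' hle (hc.mono hsub))

end Order

lemma eq_univ_of_dense_of_ordConnected {α : Type*} [LinearOrder α] [TopologicalSpace α]
    [OrderClosedTopology α] [NoMinOrder α] [NoMaxOrder α] {s : Set α} (hd : Dense s)
    (hs : s.OrdConnected) : s = univ := by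
  refine eq_univ_of_forall fun x => ?_
  obtain ⟨a, has, hax⟩ := hd.exists_lt x
  obtain ⟨b, hbs, hxb⟩ := hd.exists_gt x
  exact hs.out has hbs ⟨hax.le, hxb.le⟩

section Neg

variable {G Y : Type*} [InvolutiveNeg G] (f : G → Y)

lemma image_comp_neg (s : Set G) : (f ∘ Neg.neg) '' s = f '' (-s) := by
  rw [image_comp, image_neg_eq_neg]

lemma range_comp_neg : range (f ∘ Neg.neg) = range f :=
  neg_surjective.range_comp f

lemma isOpenEmbedding_comp_neg [TopologicalSpace G] [ContinuousNeg G] [TopologicalSpace Y]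
    {f : G → Y} (hf : IsOpenEmbedding f) : IsOpenEmbedding (f ∘ Neg.neg) :=
  hf.comp (Homeomorph.neg G).isOpenEmbedding

end Neg

lemma exists_strictMono_eqOn_Icc {φ : ℝ → ℝ} (hc : Continuous φ) (hm : StrictMono φ) {a b : ℝ}
    (hab : a ≤ b) (s : ℝ) :
    ∃ ψ : ℝ → ℝ, Continuous ψ ∧ StrictMono ψ ∧ EqOn ψ φ (Icc a b) ∧
      s ∈ ψ '' Icc (a - 1) (b + 1) := by
  -- Outside `[a, b]`, `ψ` has slope `M`, large enough to reach `s` within distance `1`.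
  let c : ℝ → ℝ := fun x => max a (min b x)
  let M : ℝ := 1 + |s - φ a| + |s - φ b|
  have hM : 0 < M := by positivity
  have hcm : Monotone c := fun x y h => max_le_max le_rfl (min_le_min le_rfl h)
  have hdm : Monotone fun x => x - c x := fun x y h => by grind
  let ψ : ℝ → ℝ := fun x => φ (c x) + M * (x - c x)
  have hψc : Continuous ψ := by fun_prop
  have hψa : ψ (a - 1) ≤ s := by
    have hca : c (a - 1) = a := by grind
    simp only [ψ, hca, M]
    linarith [neg_abs_le (s - φ a), abs_nonneg (s - φ b)]
  have hψb : s ≤ ψ (b + 1) := by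
    have hcb : c (b + 1) = b := by grind
    simp only [ψ, hcb, M]
    linarith [le_abs_self (s - φ b), abs_nonneg (s - φ a)]
  refine ⟨ψ, hψc, fun x y hxy => ?_, fun x hx => ?_,
    intermediate_value_Icc (by linarith) hψc.continuousOn ⟨hψa, hψb⟩⟩
  · rcases (hcm hxy.le).eq_or_lt with h | h
    · simpa [ψ, h, hM] using hxy
    · exact add_lt_add_of_lt_of_le (hm h) (mul_le_mul_of_nonneg_left (hdm hxy.le) hM.le)
  · have hcx : c x = x := by simp [c, hx.1, hx.2]
    simp [ψ, hcx]

section Limit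

variable {α β : Type*} {u : ℕ → α → β} {s : ℕ → Set α} {f : α → β}

lemma exists_eqOn_of_eqOn_succ (hs : Monotone s) (hcov : ∀ x, ∃ n, x ∈ s n)
    (hu : ∀ n, EqOn (u (n + 1)) (u n) (s n)) : ∃ f : α → β, ∀ n, EqOn f (u n) (s n) := by
  have hle : ∀ {m n}, m ≤ n → EqOn (u n) (u m) (s m) := fun {m n} h => by
    induction n, h using Nat.le_induction with
    | base => exact eqOn_refl _ _
    | succ n hmn ih => exact ((hu n).mono (hs hmn)).trans ih
  choose N hN using hcov
  refine ⟨fun x => u (N x) x, fun n x hx => ?_⟩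
  rcases le_total (N x) n with h | h
  · exact (hle h (hN x)).symm
  · exact hle h hx

lemma injective_of_eqOn (hs : Monotone s) (hcov : ∀ x, ∃ n, x ∈ s n)
    (hf : ∀ n, EqOn f (u n) (s n)) (hu : ∀ n, Injective (u n)) : Injective f := by
  intro x y hxy
  obtain ⟨m, hm⟩ := hcov x
  obtain ⟨n, hn⟩ := hcov y
  have hx : x ∈ s (max m n) := hs (le_max_left m n) hm
  have hy : y ∈ s (max m n) := hs (le_max_right m n) hn
  exact hu _ (by rw [← hf _ hx, ← hf _ hy, hxy])

lemma continuous_of_eqOn [TopologicalSpace α] [TopologicalSpace β] (hs : ∀ x, ∃ n, s n ∈ 𝓝 x)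
    (hf : ∀ n, EqOn f (u n) (s n)) (hu : ∀ n, Continuous (u n)) : Continuous f :=
  continuous_iff_continuousAt.2 fun x =>
    let ⟨n, hn⟩ := hs x
    (hu n).continuousAt.congr ((hf n).symm.eventuallyEq_of_mem hn)

end Limit

lemma exists_continuousOn_lift {S Y X : Type*} [TopologicalSpace S] [TopologicalSpace Y]
    [TopologicalSpace X] [Nonempty Y] {f : S → X} {g : Y → X} {s : Set S} (hg : IsInducing g)
    (hf : ContinuousOn f s) (hfg : MapsTo f s (range g)) :
    ∃ φ : S → Y, ContinuousOn φ s ∧ EqOn (g ∘ φ) f s := by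
  have hφ : EqOn (g ∘ invFun g ∘ f) f s := fun t ht => invFun_eq (hfg ht)
  exact ⟨invFun g ∘ f, hg.continuousOn_iff.2 (hf.congr hφ), hφ⟩

lemma exists_strictMono_comp_eq {X : Type*} [TopologicalSpace X] {f g : ℝ → X}
    (hf : IsOpenEmbedding f) (hg : IsOpenEmbedding g) (hfg : range f ⊆ range g) :
    ∃ g' : ℝ → X, IsOpenEmbedding g' ∧ range g' = range g ∧
      ∃ φ : ℝ → ℝ, Continuous φ ∧ StrictMono φ ∧ g' ∘ φ = f := by
  obtain ⟨φ, hφc, hφ⟩ := exists_continuousOn_lift hg.isInducing hf.continuous.continuousOn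
    (mapsTo_univ_iff.2 fun t => hfg ⟨t, rfl⟩)
  rw [continuousOn_univ] at hφc
  rw [eqOn_univ] at hφ
  have hφi : Injective φ := Injective.of_comp (hφ ▸ hf.injective)
  rcases hφc.strictMono_of_inj hφi with hm | hm
  · exact ⟨g, hg, rfl, φ, hφc, hm, hφ⟩
  · refine ⟨g ∘ Neg.neg, isOpenEmbedding_comp_neg hg, range_comp_neg g, fun t => -φ t,
      hφc.neg, hm.neg, ?_⟩
    simpa [comp_def] using hφ

section Exit

variable {X : Type*} [TopologicalSpace X] [T2Space X] {f g : ℝ → X} {a b d s : ℝ}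

lemma image_Ico_eq_image_Ici_of_strictMonoOn (hf : Continuous f) (hg : Continuous g) {φ : ℝ → ℝ}
    (had : a < d) (hc : ContinuousOn φ (Ico a d)) (hφ : EqOn (g ∘ φ) f (Ico a d))
    (hm : StrictMonoOn φ (Ico a d)) (hd : f d ∉ range g) :
    f '' Ico a d = g '' Ici (φ a) := by
  have ha : a ∈ Ico a d := left_mem_Ico.2 had
  have hφ_unbounded (r : ℝ) : ∃ t ∈ Ico a d, r < φ t := by
    by_contra! hr
    have hmaps : MapsTo f (Ico a d) (g '' Icc (φ a) r) := fun t ht =>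
      ⟨φ t, ⟨hm.monotoneOn ha ht ht.1, hr t ht⟩, hφ ht⟩
    have hd_mem : f d ∈ closure (g '' Icc (φ a) r) :=
      hmaps.closure hf (by simp [closure_Ico had.ne, had.le])
    rw [(isCompact_Icc.image hg).isClosed.closure_eq] at hd_mem
    exact hd (image_subset_range _ _ hd_mem)
  have hφ_image : φ '' Ico a d = Ici (φ a) := by
    refine Subset.antisymm (image_subset_iff.2 fun t ht => hm.monotoneOn ha ht ht.1) fun r hr => ?_
    obtain ⟨t, ht, hrt⟩ := hφ_unbounded r
    have hsub : Icc a t ⊆ Ico a d := Icc_subset_Ico_right ht.2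
    exact image_mono hsub (intermediate_value_Icc ht.1 (hc.mono hsub) ⟨hr, hrt.le⟩)
  rw [← hφ_image, ← image_comp, hφ.image_eq]

lemma exists_image_Ico_eq_of_notMem_range (hf : IsOpenEmbedding f) (hg : IsOpenEmbedding g)
    (hab : a < b) (ha : f a = g s) (hb : f b ∉ range g) :
    ∃ d ∈ Ioc a b, f d ∉ range g ∧
      (f '' Ico a d = g '' Ici s ∨ f '' Ico a d = g '' Iic s) := by
  obtain ⟨d, ⟨hd_mem, hd⟩, hd_least⟩ : ∃ d, IsLeast (Icc a b ∩ (f ⁻¹' range g)ᶜ) d :=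
    (isCompact_Icc.inter_right
      (hg.isOpen_range.preimage hf.continuous).isClosed_compl).exists_isLeast
      ⟨b, right_mem_Icc.2 hab.le, hb⟩
  have had : a < d := hd_mem.1.lt_of_ne (by rintro rfl; exact hd ⟨s, ha.symm⟩)
  have ha_mem : a ∈ Ico a d := left_mem_Ico.2 had
  have hmaps : MapsTo f (Ico a d) (range g) := fun t ht => by
    by_contra hn
    exact ht.2.not_ge (hd_least ⟨⟨ht.1, ht.2.le.trans hd_mem.2⟩, hn⟩)
  obtain ⟨φ, hφc, hφ⟩ := exists_continuousOn_lift hg.isInducing hf.continuous.continuousOn hmaps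
  have hφi : InjOn φ (Ico a d) := InjOn.of_comp ((hf.injective.injOn).congr hφ.symm)
  have hφa : φ a = s := hg.injective ((hφ ha_mem).trans ha)
  refine ⟨d, ⟨had, hd_mem.2⟩, hd, ?_⟩
  rcases strictMonoOn_or_strictAntiOn_of_injOn ⟨a, ha_mem⟩ hφc hφi with hm | hm
  · left
    rw [← hφa]
    exact image_Ico_eq_image_Ici_of_strictMonoOn hf.continuous hg.continuous had hφc hφ hm hd
  · right
    have hneg := image_Ico_eq_image_Ici_of_strictMonoOn (g := g ∘ Neg.neg) (φ := fun t => -φ t)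
      hf.continuous (hg.continuous.comp continuous_neg) had hφc.neg
      (fun t ht => by simpa using hφ ht) hm.neg (by rwa [range_comp_neg])
    rwa [image_comp_neg, neg_Ici, neg_neg, hφa] at hneg

lemma exists_image_Ioc_eq_of_notMem_range (hf : IsOpenEmbedding f) (hg : IsOpenEmbedding g)
    (hba : b < a) (ha : f a = g s) (hb : f b ∉ range g) :
    ∃ d ∈ Ico b a, f d ∉ range g ∧
      (f '' Ioc d a = g '' Ici s ∨ f '' Ioc d a = g '' Iic s) := by
  obtain ⟨d, hd_mem, hd, himage⟩ := exists_image_Ico_eq_of_notMem_range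
    (isOpenEmbedding_comp_neg hf) hg (neg_lt_neg hba) (by simpa using ha)
    (by simpa using hb)
  refine ⟨-d, ⟨by linarith [hd_mem.2], by linarith [hd_mem.1]⟩, hd, ?_⟩
  rwa [image_comp_neg, neg_Ico, neg_neg] at himage

/-- The segments `f '' Icc a t` and `g '' Icc r s` close up to a circle, which absorbs both ends of
`g`; it is open because it equals `f '' Ioo a t ∪ range g`. -/
lemma compactSpace_of_ends_subset [PreconnectedSpace X] (hf : IsOpenEmbedding f)
    (hg : IsOpenEmbedding g) {t r : ℝ} (ha : f a = g s) (ht : f t = g r)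
    (hs : g '' Ici s ⊆ f '' Icc a t) (hr : g '' Iic r ⊆ f '' Icc a t) : CompactSpace X := by
  let K := f '' Icc a t ∪ g '' Icc r s
  have hK : IsCompact K :=
    (isCompact_Icc.image hf.continuous).union (isCompact_Icc.image hg.continuous)
  have hK_eq : K = f '' Ioo a t ∪ range g := by
    apply Subset.antisymm
    · refine union_subset ?_ ((image_subset_range _ _).trans subset_union_right)
      rintro _ ⟨x, hx, rfl⟩
      rcases hx.1.eq_or_lt with rfl | hax
      · exact Or.inr ⟨s, ha.symm⟩
      rcases hx.2.eq_or_lt with rfl | hxt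
      · exact Or.inr ⟨r, ht.symm⟩
      · exact Or.inl ⟨x, ⟨hax, hxt⟩, rfl⟩
    · refine union_subset ((image_mono Ioo_subset_Icc_self).trans subset_union_left) ?_
      rintro _ ⟨x, rfl⟩
      rcases le_total x r with hxr | hrx
      · exact Or.inl (hr ⟨x, hxr, rfl⟩)
      rcases le_total s x with hsx | hxs
      · exact Or.inl (hs ⟨x, hsx, rfl⟩)
      · exact Or.inr ⟨x, ⟨hrx, hxs⟩, rfl⟩
  have hK_open : IsOpen K := hK_eq ▸ (hf.isOpenMap _ isOpen_Ioo).union hg.isOpen_range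
  have hK_univ : K = univ :=
    IsClopen.eq_univ ⟨hK.isClosed, hK_open⟩ ⟨f a, hK_eq ▸ Or.inr ⟨s, ha.symm⟩⟩
  exact ⟨hK_univ ▸ hK⟩

lemma disjoint_image_Iic_image_Ioi [PreconnectedSpace X] [NoncompactSpace X]
    (hf : IsOpenEmbedding f) (hg : IsOpenEmbedding g) (had : a < d) (ha : f a = g s)
    (hd : f d ∉ range g) (hIci : f '' Ico a d = g '' Ici s) :
    Disjoint (g '' Iic s) (f '' Ioi a) := by
  rw [Set.disjoint_left]
  rintro _ ⟨r, hr, rfl⟩ ⟨t, hat, htr⟩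
  have hrs : r < s := by
    refine lt_of_le_of_ne hr ?_
    rintro rfl
    exact hat.ne' (hf.injective (htr.trans ha.symm))
  have hdt : d < t := by
    by_contra! htd
    have htd' : t < d := htd.lt_of_ne (by rintro rfl; exact hd ⟨r, htr.symm⟩)
    have : g r ∈ g '' Ici s := hIci ▸ htr ▸ mem_image_of_mem f ⟨hat.le, htd'⟩
    exact hrs.not_ge (hg.injective.mem_set_image.1 this)
  obtain ⟨c, hc, -, hrc⟩ := exists_image_Ioc_eq_of_notMem_range hf hg hdt htr hd
  have hac : a < c := had.trans_le hc.1
  replace hrc : f '' Ioc c t = g '' Iic r := hrc.resolve_left fun h => by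
    have : f a ∈ f '' Ioc c t := h ▸ ha ▸ mem_image_of_mem g hrs.le
    exact hac.not_gt (hf.injective.mem_set_image.1 this).1
  refine not_compactSpace_iff.2 ‹NoncompactSpace X›
    (compactSpace_of_ends_subset hf hg ha htr ?_ ?_)
  · exact hIci ▸ image_mono (Ico_subset_Icc_self.trans (Icc_subset_Icc_right hdt.le))
  · exact hrc ▸ image_mono (Ioc_subset_Icc_self.trans (Icc_subset_Icc_left hac.le))

end Exit

/-- `s` is contained in an open arc of `X`, that is, in a subset of `X` that is open and
homeomorphic to `ℝ`; the arc is encoded by its parametrization. -/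
def InOpenArc {X : Type*} [TopologicalSpace X] (s : Set X) : Prop :=
  ∃ h : ℝ → X, IsOpenEmbedding h ∧ s ⊆ range h

lemma InOpenArc.mono {X : Type*} [TopologicalSpace X] {s t : Set X} (ht : InOpenArc t)
    (hst : s ⊆ t) : InOpenArc s :=
  ht.imp fun _ h => ⟨h.1, hst.trans h.2⟩

section Manifold

variable {X : Type*} [TopologicalSpace X] [ChartedSpace ℝ X] {f g : ℝ → X}

lemma isOpenEmbedding_of_continuous_injective (hf : Continuous f) (hi : Injective f) :
    IsOpenEmbedding f := by
  refine .of_continuous_injective_isOpenMap hf hi (IsOpenMap.of_nhds_le fun t => ?_)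
  refine le_map fun s hs => ?_
  let e := chartAt ℝ (f t)
  have he : f t ∈ e.source := mem_chart_source ℝ (f t)
  let s' := s ∩ f ⁻¹' e.source
  have hs' : s' ∈ 𝓝 t :=
    inter_mem hs (hf.continuousAt.preimage_mem_nhds (e.open_source.mem_nhds he))
  have hmaps : MapsTo f s' e.source := fun x hx => hx.2
  have himage : e '' (f '' s') ∈ 𝓝 (e (f t)) := by
    rw [← image_comp]
    exact image_mem_nhds_of_continuousOn_injOn hs'
      (e.continuousOn.comp hf.continuousOn hmaps) (e.injOn.comp hi.injOn hmaps)
  filter_upwards [e.continuousAt he himage, e.open_source.mem_nhds he] with y hy hye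
  obtain ⟨_, ⟨x, hx, rfl⟩, hxy⟩ := hy
  exact ⟨x, hx.1, e.injOn hx.2 hye hxy⟩

lemma inOpenArc_singleton (x : X) : InOpenArc {x} := by
  let e := chartAt ℝ x
  obtain ⟨r, hr, hball⟩ :=
    Metric.mem_nhds_iff.1 (e.open_target.mem_nhds (mem_chart_target ℝ x))
  let u : OpenPartialHomeomorph ℝ ℝ := .univBall (e x) r
  have hu : (u.trans e.symm).source = univ := by
    rw [u.trans_source, OpenPartialHomeomorph.univBall_source, univ_inter]
    refine eq_univ_of_forall fun t => hball ?_
    rw [← OpenPartialHomeomorph.univBall_target (e x) hr]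
    exact u.map_source (by simp [u])
  refine ⟨u.trans e.symm, (u.trans e.symm).isOpenEmbedding hu, singleton_subset_iff.2 ⟨0, ?_⟩⟩
  simp [u, e]

lemma inOpenArc_concat {a s : ℝ} (hf : IsOpenEmbedding f) (hg : IsOpenEmbedding g) (ha : f a = g s)
    (hdisj : Disjoint (g '' Iic s) (f '' Ioi a)) : InOpenArc (g '' Iic s ∪ f '' Ioi a) := by
  classical
  let h : ℝ → X := (Iic s).piecewise g fun x => f (x + (a - s))
  have hc : Continuous h := by
    refine Continuous.if_le hg.continuous (hf.continuous.comp (by fun_prop)) continuous_id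
      continuous_const ?_
    rintro x rfl
    simp [ha]
  have himage : (fun x => f (x + (a - s))) '' (Iic s)ᶜ = f '' Ioi a := by
    rw [← image_image f, compl_Iic, image_add_const_Ioi, add_sub_cancel]
  have hi : Injective h := by
    refine (injective_piecewise_iff _).2 ⟨hg.injective.injOn,
      (hf.injective.comp (add_left_injective _)).injOn, fun x hx y hy => ?_⟩
    exact hdisj.ne_of_mem (mem_image_of_mem g hx)
      (himage ▸ mem_image_of_mem (fun x => f (x + (a - s))) hy)
  exact ⟨h, isOpenEmbedding_of_continuous_injective hc hi,
    by rw [range_piecewise, himage]⟩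

variable [T2Space X] [PreconnectedSpace X] [NoncompactSpace X]

lemma inOpenArc_union_of_image_Ico_eq {a d s : ℝ} (hf : IsOpenEmbedding f) (hg : IsOpenEmbedding g)
    (had : a < d) (ha : f a = g s) (hd : f d ∉ range g) (hIci : f '' Ico a d = g '' Ici s)
    (hgf : ¬ range g ⊆ range f) : InOpenArc (range f ∪ range g) := by
  obtain ⟨_, ⟨q, rfl⟩, hq⟩ := not_subset.1 hgf
  have hqs : q < s := by
    by_contra! hsq
    exact hq (image_subset_range _ _ (hIci ▸ mem_image_of_mem g hsq))
  obtain ⟨e, -, -, hIic⟩ := exists_image_Ioc_eq_of_notMem_range hg hf hqs ha.symm hq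
  replace hIic : g '' Ioc e s = f '' Iic a := hIic.resolve_left fun h =>
    hd (image_subset_range _ _ (h ▸ mem_image_of_mem f had.le))
  have hdisj := disjoint_image_Iic_image_Ioi hf hg had ha hd hIci
  refine (inOpenArc_concat hf hg ha hdisj).mono (union_subset ?_ ?_)
  · rw [← image_univ, ← Iic_union_Ioi (a := a), image_union, ← hIic]
    exact union_subset_union_left _ (image_mono Ioc_subset_Iic_self)
  · rw [← image_univ, ← Iic_union_Ici (a := s), image_union, ← hIci, ← Ioo_insert_left had,
      image_insert_eq, ha]
    refine union_subset subset_union_left (insert_subset (Or.inl ⟨s, self_mem_Iic, rfl⟩) ?_)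
    exact (image_mono Ioo_subset_Ioi_self).trans subset_union_right

lemma inOpenArc_union_of_notMem_range {a b s : ℝ} (hf : IsOpenEmbedding f) (hg : IsOpenEmbedding g)
    (hab : a < b) (ha : f a = g s) (hb : f b ∉ range g) (hgf : ¬ range g ⊆ range f) :
    InOpenArc (range f ∪ range g) := by
  obtain ⟨d, hd_mem, hd, hE | hE⟩ := exists_image_Ico_eq_of_notMem_range hf hg hab ha hb
  · exact inOpenArc_union_of_image_Ico_eq hf hg hd_mem.1 ha hd hE hgf
  · rw [← range_comp_neg g] at hd hgf ⊢
    refine inOpenArc_union_of_image_Ico_eq (s := -s) hf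
      (isOpenEmbedding_comp_neg hg) hd_mem.1 (by simpa using ha) hd ?_ hgf
    rw [hE, image_comp_neg, neg_Ici, neg_neg]

lemma inOpenArc_union_of_inter_nonempty (hf : IsOpenEmbedding f) (hg : IsOpenEmbedding g)
    (hfg : (range f ∩ range g).Nonempty) : InOpenArc (range f ∪ range g) := by
  by_cases hgf : range g ⊆ range f
  · exact ⟨f, hf, union_subset Subset.rfl hgf⟩
  by_cases hfg' : range f ⊆ range g
  · exact ⟨g, hg, union_subset hfg' Subset.rfl⟩
  obtain ⟨_, ⟨b, rfl⟩, hb⟩ := not_subset.1 hfg'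
  obtain ⟨_, ⟨a, rfl⟩, s, hs⟩ := hfg
  rcases lt_trichotomy a b with hab | rfl | hba
  · exact inOpenArc_union_of_notMem_range hf hg hab hs.symm hb hgf
  · exact absurd ⟨s, hs⟩ hb
  · rw [← range_comp_neg f] at hgf ⊢
    exact inOpenArc_union_of_notMem_range (isOpenEmbedding_comp_neg hf) hg
      (neg_lt_neg hba) (by simpa using hs.symm) (by simpa using hb) hgf

lemma InOpenArc.union_of_inter_nonempty {s t : Set X} (hs : InOpenArc s) (ht : InOpenArc t)
    (hst : (s ∩ t).Nonempty) : InOpenArc (s ∪ t) := by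
  obtain ⟨f, hf, hsf⟩ := hs
  obtain ⟨g, hg, htg⟩ := ht
  exact (inOpenArc_union_of_inter_nonempty hf hg (hst.mono (inter_subset_inter hsf htg))).mono
    (union_subset_union hsf htg)

lemma inOpenArc_pair (x y : X) : InOpenArc {x, y} := by
  let P : X → X → Prop := fun x y => InOpenArc {x, y}
  have : Std.Symm P := ⟨fun x y (h : InOpenArc {x, y}) => show InOpenArc {y, x} by rwa [pair_comm]⟩
  refine PreconnectedSpace.induction₂ P (fun x => ?_) ⟨fun x y z hxy hyz => ?_⟩ x y
  · obtain ⟨h, hh, hx⟩ := inOpenArc_singleton x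
    filter_upwards [hh.isOpen_range.mem_nhds (hx rfl)] with y hy
    exact ⟨h, hh, pair_subset (hx rfl) hy⟩
  · exact (hxy.union_of_inter_nonempty hyz ⟨y, by simp⟩).mono (by grind)

lemma InOpenArc.union {s t : Set X} (hs : InOpenArc s) (ht : InOpenArc t) : InOpenArc (s ∪ t) := by
  rcases s.eq_empty_or_nonempty with rfl | ⟨x, hx⟩
  · rwa [empty_union]
  rcases t.eq_empty_or_nonempty with rfl | ⟨y, hy⟩
  · rwa [union_empty]
  have hxy := hs.union_of_inter_nonempty (inOpenArc_pair x y) ⟨x, hx, by simp⟩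
  exact (hxy.union_of_inter_nonempty ht ⟨y, by simp, hy⟩).mono (by grind)

lemma exists_isOpenEmbedding_eqOn_Icc (hf : IsOpenEmbedding f) {a b : ℝ} (hab : a ≤ b) (x : X) :
    ∃ h : ℝ → X, IsOpenEmbedding h ∧ EqOn h f (Icc a b) ∧ x ∈ h '' Icc (a - 1) (b + 1) := by
  obtain ⟨g, hg, hfg⟩ : InOpenArc (range f ∪ {x}) :=
    InOpenArc.union ⟨f, hf, Subset.rfl⟩ (inOpenArc_singleton x)
  obtain ⟨hfg, hxg⟩ := union_subset_iff.1 hfg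
  obtain ⟨g, hg, hrange, φ, hφc, hφm, rfl⟩ := exists_strictMono_comp_eq hf hg hfg
  obtain ⟨t, ht⟩ : x ∈ range g := hrange ▸ hxg rfl
  obtain ⟨ψ, hψc, hψm, hψ, y, hy, hyt⟩ := exists_strictMono_eqOn_Icc hφc hφm hab t
  exact ⟨g ∘ ψ, isOpenEmbedding_of_continuous_injective (hg.continuous.comp hψc)
    (hg.injective.comp hψm.injective), hψ.comp_left, y, hy, by rw [comp_apply, hyt, ht]⟩

lemma exists_isOpenEmbedding_seq_mem_range (x : ℕ → X) :
    ∃ f : ℝ → X, IsOpenEmbedding f ∧ ∀ n, x n ∈ range f := by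
  obtain ⟨f₀, hf₀, -⟩ := inOpenArc_singleton (x 0)
  choose F hF hF_eqOn hF_mem using fun (n : ℕ) (f : {f : ℝ → X // IsOpenEmbedding f}) =>
    exists_isOpenEmbedding_eqOn_Icc f.2 (a := -n) (b := n) (by simp) (x n)
  let u : ℕ → {f : ℝ → X // IsOpenEmbedding f} :=
    fun n => Nat.rec ⟨f₀, hf₀⟩ (fun n f => ⟨F n f, hF n f⟩) n
  let s : ℕ → Set ℝ := fun n => Icc (-n) n
  have hs : Monotone s := fun m n h => by
    have : (m : ℝ) ≤ n := mod_cast h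
    exact Icc_subset_Icc (neg_le_neg this) this
  have hs_nhds (t : ℝ) : ∃ n, s n ∈ 𝓝 t := by
    obtain ⟨n, hn⟩ := exists_nat_gt |t|
    exact ⟨n, Icc_mem_nhds (abs_lt.1 hn).1 (abs_lt.1 hn).2⟩
  have hcov (t : ℝ) : ∃ n, t ∈ s n := (hs_nhds t).imp fun _ => mem_of_mem_nhds
  obtain ⟨f, hf⟩ := exists_eqOn_of_eqOn_succ (u := fun n => (u n).1) hs hcov
    fun n => hF_eqOn n (u n)
  refine ⟨f, isOpenEmbedding_of_continuous_injective
    (continuous_of_eqOn hs_nhds hf fun n => (u n).2.continuous)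
    (injective_of_eqOn hs hcov hf fun n => (u n).2.injective), fun n => ?_⟩
  obtain ⟨t, ht, htx⟩ := hF_mem n (u n)
  have ht' : t ∈ s (n + 1) := by
    simp only [s, Nat.cast_add_one]
    exact ⟨by linarith [ht.1], ht.2⟩
  exact ⟨t, (hf (n + 1) ht').trans htx⟩

lemma surjective_of_denseRange (hf : IsOpenEmbedding f) (hd : DenseRange f) : Surjective f := by
  intro x
  obtain ⟨g, hg, hfg⟩ : InOpenArc (range f ∪ {x}) :=
    InOpenArc.union ⟨f, hf, Subset.rfl⟩ (inOpenArc_singleton x)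
  obtain ⟨hfg, hxg⟩ := union_subset_iff.1 hfg
  have hdense : Dense (g ⁻¹' range f) := hd.preimage hg.isOpenMap
  have hconn : IsPreconnected (g ⁻¹' range f) :=
    (isPreconnected_range hf.continuous).preimage_of_isOpenMap hg.injective hg.isOpenMap hfg
  obtain ⟨t, rfl⟩ := hxg rfl
  exact eq_univ_iff_forall.1 (eq_univ_of_dense_of_ordConnected hdense hconn.ordConnected) t

end Manifold

end OneManifold

open OneManifold

theorem noncompact_one_manifold_homeomorph_real_general
    (X : Type*) [TopologicalSpace X] [ConnectedSpace X] [T2Space X] [SeparableSpace X]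
    [ChartedSpace ℝ X] (hnc : ¬ CompactSpace X) :
    Nonempty (X ≃ₜ ℝ) := by
  have : NoncompactSpace X := not_compactSpace_iff.1 hnc
  obtain ⟨f, hf, hmem⟩ := exists_isOpenEmbedding_seq_mem_range (denseSeq X)
  have hdense : DenseRange f := (denseRange_denseSeq X).mono (range_subset_iff.2 hmem)
  exact ⟨(hf.isEmbedding.toHomeomorphOfSurjective (surjective_of_denseRange hf hdense)).symm⟩

/-- Every nonempty, connected, non-compact, Hausdorff, second-countable topological
1-manifold (without boundary) is homeomorphic to `ℝ`. -/
theorem noncompact_one_manifold_homeomorph_real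
    (X : Type*) [TopologicalSpace X] [Nonempty X] [ConnectedSpace X]
    [T2Space X] [SecondCountableTopology X] [ChartedSpace ℝ X]
    (hnc : ¬ CompactSpace X) :
    Nonempty (X ≃ₜ ℝ) :=
  noncompact_one_manifold_homeomorph_real_general X hnc
end
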